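/- arXiv:2111.13306 — 4 statements merged into one kernel-verified Lean document; each statement's English description precedes it below -/
import Mathlib

section
/- Let (g,[·,·],[·,·]') be a compatible Lie algebra and (V,ρ,ρ') a representation of it. Let ∂ be the Chevalley–Eilenberg differential of the Lie algebra (g,[·,·]) with coefficients in (V,ρ), and ∂' the Chevalley–Eilenberg differential of (g,[·,·]') with coefficients in (V,ρ'). Then for every n ≥ 0 and every alternating n-linear map f: gⁿ → V, one has ∂(∂'f) + ∂'(∂f) = 0. -/
variable {K : Type*} [Field K] [CharZero K]
variable {g V : Type*} [AddCommGroup g] [Module K g] [AddCommGroup V] [Module K V]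

/-- The Chevalley–Eilenberg differential (defined on arbitrary `n`-cochains
`(Fin n → g) → V`), for a bracket `br` on `g` and an action `ρ : g → End V`:
`(∂f)(x₁,…,x_{n+1}) = Σᵢ (−1)^{i+1} ρ(xᵢ) f(x₁,…,x̂ᵢ,…,x_{n+1})
  + Σ_{i<j} (−1)^{i+j} f([xᵢ,xⱼ], x₁,…,x̂ᵢ,…,x̂ⱼ,…,x_{n+1})`,
and for `n = 0`, `(∂v)(x) = ρ(x) v`. -/
def ceDiff (br : g → g → g) (ρ : g → Module.End K V) :
    (n : ℕ) → ((Fin n → g) → V) → ((Fin (n + 1) → g) → V)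
  | 0, f => fun x => ρ (x 0) (f Fin.elim0)
  | n + 1, f => fun x =>
      (∑ i : Fin (n + 2), ((-1 : ℤ) ^ (i : ℕ)) • ρ (x i) (f (x ∘ i.succAbove))) +
      ∑ i : Fin (n + 2), ∑ j : Fin (n + 2),
        if h : (i : ℕ) < (j : ℕ) then
          ((-1 : ℤ) ^ ((i : ℕ) + (j : ℕ))) •
            f (Fin.cons (br (x i) (x j)) (fun k : Fin n =>
              x (j.succAbove ((Fin.castLT i
                (lt_of_lt_of_le h (Nat.lt_succ_iff.mp j.isLt))).succAbove k))))
        else 0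


/-!
The argument is Cartan calculus. With `ι_y` the contraction and `L_y` the Lie derivative of
cochains, `ι_z L_y = L_y ι_z - ι_{[y,z]}` and, on skew-symmetric cochains, `ι_y ∂ = L_y - ∂ ι_y`.
A cochain of positive degree is determined by its contractions, so by induction on the degree the
compatibility of the two structures gives in turn
* `[L_y, L'_z] + [L'_y, L_z] = L_{[y,z]'} + L'_{[y,z]}`,
* `[L_y, ∂'] + [L'_y, ∂] = 0`,
* `∂∂' + ∂'∂ = 0`.
-/

/-- Arbitrary `M`-valued functions of `n` arguments in `L`, the domain of `ceDiff`; multilinearity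
and skew-symmetry are imposed separately. -/
abbrev Cochain (L M : Type*) (n : ℕ) := (Fin n → L) → M

namespace Cochain

section Skew

variable {L M : Type*} [AddCommGroup M] {n : ℕ}

/-- The contraction `ι_y`, which fixes the first argument of a cochain to be `y`. -/
def contract (y : L) : Cochain L M (n + 1) →+ Cochain L M n where
  toFun f x := f (Fin.cons y x)
  map_zero' := rfl
  map_add' _ _ := rfl

@[simp]
theorem contract_apply (y : L) (f : Cochain L M (n + 1)) (x : Fin n → L) :
    contract y f x = f (Fin.cons y x) := rfl

theorem ext_contract {f h : Cochain L M (n + 1)} (H : ∀ y, contract y f = contract y h) :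
    f = h := by
  funext x
  simpa using congrFun (H (x 0)) (Fin.tail x)

/-- Skew-symmetry under permutations of the arguments; unlike for `AlternatingMap`, nothing is
required of the values at tuples with repeated entries. -/
def IsSkew (f : Cochain L M n) : Prop :=
  ∀ (σ : Equiv.Perm (Fin n)) (x : Fin n → L), f (x ∘ σ) = Equiv.Perm.sign σ • f x

theorem IsSkew.sub {f h : Cochain L M n} (hf : IsSkew f) (hh : IsSkew h) : IsSkew (f - h) :=
  fun σ x => by simp only [Pi.sub_apply, hf σ x, hh σ x, smul_sub]

protected theorem IsSkew.contract {f : Cochain L M (n + 1)} (hf : IsSkew f) (y : L) :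
    IsSkew (contract y f) := by
  intro σ x
  have cons_comp : (Fin.cons y (x ∘ σ) : Fin (n + 1) → L) =
      Fin.cons y x ∘ Equiv.Perm.decomposeFin.symm (0, σ) :=
    funext (Fin.cases (by simp) fun k => by simp)
  rw [contract_apply, cons_comp, hf, Equiv.Perm.decomposeFin.symm_sign, if_pos rfl, one_mul,
    contract_apply]

theorem cons_comp_swap_succ (y : L) (x : Fin n → L) (i j : Fin n) :
    (Fin.cons y x : Fin (n + 1) → L) ∘ Equiv.swap i.succ j.succ =
      Fin.cons y (x ∘ Equiv.swap i j) :=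
  funext (Fin.cases (by simp [Equiv.swap_apply_of_ne_of_ne, (Fin.succ_ne_zero _).symm])
    fun k => by simp [← (Fin.succ_injective n).map_swap])

theorem cons_cons_comp_swap (y z : L) (x : Fin n → L) :
    (Fin.cons y (Fin.cons z x) : Fin (n + 2) → L) ∘ Equiv.swap 0 1 =
      Fin.cons z (Fin.cons y x) :=
  funext (Fin.cases (by simp) (Fin.cases (by simp) fun k => by
    simp [Equiv.swap_apply_def, Fin.ext_iff]))

theorem IsSkew.contract_contract {f : Cochain L M (n + 2)} (hf : IsSkew f) (y z : L) :
    contract z (contract y f) = -contract y (contract z f) := by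
  funext x
  simp only [contract_apply, Pi.neg_apply]
  rw [← cons_cons_comp_swap z y, hf, Equiv.Perm.sign_swap Fin.zero_ne_one, Units.neg_smul, one_smul]

theorem isSkew_one (f : Cochain L M 1) : IsSkew f :=
  fun σ x => by simp [Subsingleton.elim σ 1]

theorem isSkew_of_adjacent {f : Cochain L M (n + 1)}
    (hf : ∀ (i : Fin n) x, f (x ∘ Equiv.swap i.castSucc i.succ) = -f x) : IsSkew f := by
  intro σ
  have mem : σ ∈ Submonoid.closure (Set.range fun i : Fin n => Equiv.swap i.castSucc i.succ) := by
    simp [Equiv.Perm.mclosure_swap_castSucc_succ]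
  induction mem using Submonoid.closure_induction with
  | mem τ hτ =>
    obtain ⟨i, rfl⟩ := hτ
    simp [hf, Equiv.Perm.sign_swap i.castSucc_lt_succ.ne]
  | one => simp
  | mul σ τ _ _ hσ hτ =>
    intro x
    rw [Equiv.Perm.coe_mul, ← Function.comp_assoc, hτ, hσ, smul_smul, mul_comm, map_mul]

theorem isSkew_of_contract {f : Cochain L M (n + 2)} (hf : ∀ y, IsSkew (contract y f))
    (hswap : ∀ y z, contract z (contract y f) = -contract y (contract z f)) : IsSkew f := by
  refine isSkew_of_adjacent fun i x => ?_
  cases x using Fin.consCases with | _ y x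
  cases i using Fin.cases with
  | zero =>
    cases x using Fin.consCases with | _ z x
    rw [Fin.castSucc_zero, Fin.succ_zero_eq_one, cons_cons_comp_swap]
    exact congrFun (hswap z y) x
  | succ i =>
    rw [Fin.castSucc_succ, cons_comp_swap_succ]
    simpa [Equiv.Perm.sign_swap i.castSucc_lt_succ.ne] using
      hf y (Equiv.swap i.castSucc i.succ) x

theorem IsSkew.map_update {f : Cochain L M (n + 1)} (hf : IsSkew f) (x : Fin (n + 1) → L)
    (j : Fin (n + 1)) (w : L) :
    f (Function.update x j w) = (-1 : ℤ) ^ (j : ℕ) • f (Fin.cons w (j.removeNth x)) := by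
  rw [← Fin.insertNth_removeNth, ← Fin.cons_comp_cycleRange, hf, Fin.sign_cycleRange]
  simp [Units.smul_def]

end Skew

section LieDerivative

variable {R L M : Type*} [Semiring R] [AddCommGroup M] [Module R M] {n : ℕ}

/-- The Lie derivative `L_y` of cochains,
`(L_y f)(x₁,…,xₙ) = ρ(y) f(x₁,…,xₙ) - ∑ⱼ f(x₁,…,[y,xⱼ],…,xₙ)`. -/
def lieDeriv (br : L → L → L) (ρ : L → Module.End R M) (y : L) :
    Module.End R (Cochain L M n) :=
  (ρ y).compLeft _ -
    ∑ j, LinearMap.funLeft R M fun x : Fin n → L => Function.update x j (br y (x j))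

variable (br : L → L → L) (ρ : L → Module.End R M)

theorem lieDeriv_apply (y : L) (f : Cochain L M n) (x : Fin n → L) :
    lieDeriv br ρ y f x = ρ y (f x) - ∑ j, f (Function.update x j (br y (x j))) := by
  simp [lieDeriv, LinearMap.funLeft]

theorem contract_lieDeriv (y z : L) (f : Cochain L M (n + 1)) :
    contract z (lieDeriv br ρ y f) =
      lieDeriv br ρ y (contract z f) - contract (br y z) f := by
  funext x
  simp [lieDeriv_apply, Fin.sum_univ_succ, Fin.cons_update, sub_sub, add_comm]

variable {br ρ} in
protected theorem IsSkew.lieDeriv {f : Cochain L M n} (hf : IsSkew f) (y : L) :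
    IsSkew (lieDeriv br ρ y f) := by
  intro σ x
  have update_comp (j : Fin n) : f (Function.update (x ∘ σ) j (br y ((x ∘ σ) j))) =
      Equiv.Perm.sign σ • f (Function.update x (σ j) (br y (x (σ j)))) := by
    rw [← hf, Function.update_comp_eq_of_injective _ σ.injective]; rfl
  simp only [lieDeriv_apply, update_comp, hf σ x, smul_sub, Finset.smul_sum, map_zsmul,
    Units.smul_def]
  rw [Equiv.sum_comp σ fun j => _ • f (Function.update x j (br y (x j)))]

end LieDerivative

section Compatible

/-- Compatibility of two brackets and two actions: the mixed terms of the identities saying that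
`br + br'` is a Lie bracket and `ρ + ρ'` a representation of it. The Jacobi identity is taken in its
Leibniz form, the one in which `lieDeriv` uses it. -/
structure IsCompatible {R L M : Type*} [Semiring R] [AddCommGroup L] [AddCommGroup M] [Module R M]
    (br br' : L → L → L) (ρ ρ' : L → Module.End R M) : Prop where
  leibniz : ∀ x y z, br (br' x y) z + br' (br x y) z =
    br x (br' y z) - br' y (br x z) + (br' x (br y z) - br y (br' x z))
  action : ∀ x y, ρ (br' x y) + ρ' (br x y) =
    ρ x * ρ' y - ρ' y * ρ x + (ρ' x * ρ y - ρ y * ρ' x)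

variable {R L M : Type*} [CommSemiring R] [AddCommGroup L] [Module R L] [AddCommGroup M]
  [Module R M] {n : ℕ}

theorem contract_multilinearMap (y : L) (f : MultilinearMap R (fun _ : Fin (n + 1) => L) M) :
    contract y f = f.curryLeft y := rfl

theorem contract_add_left (f : MultilinearMap R (fun _ : Fin (n + 1) => L) M) (y z : L) :
    contract (y + z) f = contract y f + contract z f := by
  simp only [contract_multilinearMap, map_add]; rfl

theorem contract_sub_left (f : MultilinearMap R (fun _ : Fin (n + 1) => L) M) (y z : L) :
    contract (y - z) f = contract y f - contract z f := by
  simp only [contract_multilinearMap, map_sub]; rfl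

variable {br br' : L → L → L} {ρ ρ' : L → Module.End R M}

theorem IsCompatible.lieDeriv_bracket (h : IsCompatible br br' ρ ρ') (y z : L)
    (f : MultilinearMap R (fun _ : Fin n => L) M) :
    lieDeriv br ρ (br' y z) f + lieDeriv br' ρ' (br y z) f =
      lieDeriv br ρ y (lieDeriv br' ρ' z f) - lieDeriv br' ρ' z (lieDeriv br ρ y f) +
        (lieDeriv br' ρ' y (lieDeriv br ρ z f) - lieDeriv br ρ z (lieDeriv br' ρ' y f)) := by
  induction n with
  | zero =>
    funext x
    simpa [lieDeriv_apply] using LinearMap.congr_fun (h.action y z) (f x)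
  | succ n ih =>
    refine ext_contract fun w => ?_
    have leibniz := congrArg (fun u => contract u f) (h.leibniz y z w)
    simp only [contract_add_left, contract_sub_left] at leibniz
    simp only [contract_lieDeriv, map_sub, map_add]
    rw [sub_add_sub_comm, leibniz, contract_multilinearMap w, ih]
    abel

end Compatible

section CartanFormula

variable {R L M : Type*} [Semiring R] [AddCommGroup M] [Module R M] {n : ℕ}
variable (br : L → L → L) (ρ : L → Module.End R M)

/-- The summand `∑ᵢ (-1)^{i+1} ρ(xᵢ) f(x₁,…,x̂ᵢ,…,x_{n+1})` of the Chevalley–Eilenberg differential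
(indices start at `0` in the code). -/
def actionDiff (f : Cochain L M n) : Cochain L M (n + 1) := fun x =>
  ∑ i : Fin (n + 1), (-1 : ℤ) ^ (i : ℕ) • ρ (x i) (f (i.removeNth x))

/-- The tuple `x₁,…,x̂ᵢ,…,x̂ⱼ,…,x_{n+2}`, which fills the remaining arguments in `bracketDiff`. -/
def removePair (x : Fin (n + 2) → L) (i j : Fin (n + 2)) (h : (i : ℕ) < j) : Fin n → L := fun k =>
  x (j.succAbove ((i.castLT (h.trans_le (Nat.lt_succ_iff.mp j.isLt))).succAbove k))

/-- The summand `∑_{i<j} (-1)^{i+j} f([xᵢ,xⱼ],x₁,…,x̂ᵢ,…,x̂ⱼ,…,x_{n+1})` of the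
Chevalley–Eilenberg differential, which is empty for `n = 0`. -/
def bracketDiff : (n : ℕ) → Cochain L M n → Cochain L M (n + 1)
  | 0, _ => 0
  | n + 1, f => fun x =>
      ∑ i : Fin (n + 2), ∑ j : Fin (n + 2),
        if h : (i : ℕ) < (j : ℕ) then
          (-1 : ℤ) ^ ((i : ℕ) + (j : ℕ)) •
            f (Fin.cons (br (x i) (x j)) (removePair x i j h))
        else 0

theorem contract_actionDiff_zero (y : L) (f : Cochain L M 0) (x : Fin 0 → L) :
    contract y (actionDiff ρ f) x = ρ y (f x) := by
  simp [actionDiff, Subsingleton.elim _ x]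

theorem contract_actionDiff_succ (y : L) (f : Cochain L M (n + 1)) (x : Fin (n + 1) → L) :
    contract y (actionDiff ρ f) x = ρ y (f x) - actionDiff ρ (contract y f) x := by
  have removeNth_cons (i : Fin (n + 1)) :
      i.succ.removeNth (Fin.cons y x : Fin (n + 2) → L) = Fin.cons y (i.removeNth x) :=
    Fin.cons_comp_succ_succAbove y x i
  simp [actionDiff, Fin.sum_univ_succ (n := n + 1), pow_succ, sub_eq_add_neg, removeNth_cons]

theorem removePair_cons_zero (y : L) (x : Fin (n + 1) → L) (j : Fin (n + 1))
    (h : ((0 : Fin (n + 2)) : ℕ) < j.succ) :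
    removePair (Fin.cons y x) 0 j.succ h = j.removeNth x := by
  funext k
  change (Fin.cons y x : Fin (n + 2) → L) (j.succ.succAbove ((0 : Fin (n + 1)).succAbove k)) = _
  simp [Fin.removeNth]

theorem removePair_cons_succ (y : L) (x : Fin (n + 2) → L) (i j : Fin (n + 2))
    (h : (i.succ : ℕ) < j.succ) :
    removePair (Fin.cons y x) i.succ j.succ h =
      Fin.cons y (removePair x i j (Nat.lt_of_succ_lt_succ h)) := by
  funext k
  change (Fin.cons y x : Fin (n + 3) → L)
    (j.succ.succAbove ((i.castLT (by grind)).succ.succAbove k)) = _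
  cases k using Fin.cases with
  | zero => simp
  | succ k => simp [removePair]

theorem contract_bracketDiff {f : Cochain L M (n + 1)} (hf : IsSkew f) (y : L)
    (x : Fin (n + 1) → L) :
    contract y (bracketDiff br (n + 1) f) x =
      -(∑ j, f (Function.update x j (br y (x j)))) - bracketDiff br n (contract y f) x := by
  have pairs_zero : ∑ j : Fin (n + 1), (-1 : ℤ) ^ (j.succ : ℕ) •
      f (Fin.cons (br y (x j)) (j.removeNth x)) =
        -∑ j, f (Function.update x j (br y (x j))) := by
    simp [hf.map_update, pow_succ]
  simp only [contract_apply, bracketDiff, Fin.sum_univ_succ (n := n + 1), Fin.cons_zero,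
    Fin.cons_succ, removePair_cons_zero, Fin.val_zero, Fin.val_succ, Nat.succ_pos, dite_true,
    Nat.not_lt_zero, dite_false, zero_add]
  rw [sub_eq_add_neg, ← pairs_zero]
  congr 1
  cases n with
  | zero => simp
  | succ n =>
    simp only [← Finset.sum_neg_distrib]
    refine Finset.sum_congr rfl fun i _ => Finset.sum_congr rfl fun j _ => ?_
    by_cases h : (i : ℕ) < j
    · have swap_front := congrFun (hf.contract_contract (br (x i) (x j)) y) (removePair x i j h)
      simp only [contract_apply, Pi.neg_apply] at swap_front
      simp [h, removePair_cons_succ, swap_front, ← add_assoc, pow_succ, add_right_comm _ 1]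
    · simp [h]

end CartanFormula

section ChevalleyEilenberg

variable {k L M : Type*} [Field k] [AddCommGroup M] [Module k M] {n : ℕ}
variable (br : L → L → L) (ρ : L → Module.End k M)

theorem ceDiff_eq_actionDiff_add_bracketDiff (f : Cochain L M n) :
    ceDiff br ρ n f = actionDiff ρ f + bracketDiff br n f := by
  cases n with
  | zero =>
    funext x
    simp [ceDiff, actionDiff, bracketDiff, Subsingleton.elim _ (Fin.elim0 : Fin 0 → L)]
  | succ n => rfl

theorem ceDiff_add (f h : Cochain L M n) :
    ceDiff br ρ n (f + h) = ceDiff br ρ n f + ceDiff br ρ n h := by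
  cases n with
  | zero => funext x; simp [ceDiff]
  | succ n =>
    funext x
    simp only [ceDiff, Pi.add_apply, map_add, smul_add, Finset.sum_add_distrib]
    rw [add_add_add_comm]
    congr 1
    simp only [← Finset.sum_add_distrib, dite_add_dite, add_zero]

theorem ceDiff_neg (f : Cochain L M n) : ceDiff br ρ n (-f) = -ceDiff br ρ n f :=
  (AddMonoidHom.mk' _ (ceDiff_add br ρ)).map_neg f

theorem ceDiff_sub (f h : Cochain L M n) :
    ceDiff br ρ n (f - h) = ceDiff br ρ n f - ceDiff br ρ n h :=
  (AddMonoidHom.mk' _ (ceDiff_add br ρ)).map_sub f h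

theorem contract_ceDiff_zero (y : L) (f : Cochain L M 0) :
    contract y (ceDiff br ρ 0 f) = lieDeriv br ρ y f := by
  funext x
  rw [ceDiff_eq_actionDiff_add_bracketDiff, map_add, Pi.add_apply, contract_actionDiff_zero,
    lieDeriv_apply]
  simp [bracketDiff]

theorem contract_ceDiff_succ {f : Cochain L M (n + 1)} (hf : IsSkew f) (y : L) :
    contract y (ceDiff br ρ (n + 1) f) =
      lieDeriv br ρ y f - ceDiff br ρ n (contract y f) := by
  funext x
  simp only [ceDiff_eq_actionDiff_add_bracketDiff, map_add, Pi.add_apply, Pi.sub_apply,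
    contract_actionDiff_succ, contract_bracketDiff br hf, lieDeriv_apply]
  abel

end ChevalleyEilenberg

section Anticommutation

variable {k L M : Type*} [Field k] [AddCommGroup L] [Module k L] [AddCommGroup M] [Module k M]
  {n : ℕ}

theorem isSkew_alternatingMap (f : L [⋀^Fin n]→ₗ[k] M) : IsSkew f :=
  fun σ x => f.map_perm x σ

theorem contract_alternatingMap (y : L) (f : L [⋀^Fin (n + 1)]→ₗ[k] M) :
    contract y f = f.curryLeft y := rfl

variable {br br' : L → L → L} {ρ ρ' : L → Module.End k M}

theorem isSkew_ceDiff (hbr : ∀ x y, br x y = -br y x) (ρ : L → Module.End k M)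
    (f : L [⋀^Fin n]→ₗ[k] M) : IsSkew (ceDiff br ρ n f) := by
  induction n with
  | zero => exact isSkew_one _
  | succ n ih =>
    have hf := isSkew_alternatingMap f
    refine isSkew_of_contract (fun y => ?_) fun y z => ?_
    · rw [contract_ceDiff_succ br ρ hf]
      exact (hf.lieDeriv y).sub (ih (f.curryLeft y))
    · have contract_br : contract (br z y) f = -contract (br y z) f := by
        rw [hbr, contract_alternatingMap, map_neg]; rfl
      simp only [contract_ceDiff_succ br ρ hf, map_sub, contract_lieDeriv, contract_br]
      cases n with
      | zero => simp only [contract_ceDiff_zero]; abel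
      | succ n =>
        simp only [contract_ceDiff_succ br ρ (hf.contract _), hf.contract_contract y z, ceDiff_neg]
        abel

theorem IsCompatible.lieDeriv_ceDiff (h : IsCompatible br br' ρ ρ') (y : L)
    (f : L [⋀^Fin n]→ₗ[k] M) :
    lieDeriv br ρ y (ceDiff br' ρ' n f) + lieDeriv br' ρ' y (ceDiff br ρ n f) =
      ceDiff br ρ n (lieDeriv br' ρ' y f) + ceDiff br' ρ' n (lieDeriv br ρ y f) := by
  induction n with
  | zero =>
    refine ext_contract fun z => ?_
    have comm := h.lieDeriv_bracket y z f.toMultilinearMap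
    simp only [AlternatingMap.coe_multilinearMap] at comm
    simp only [contract_lieDeriv, map_add, contract_ceDiff_zero]
    linear_combination (norm := abel) -comm
  | succ n ih =>
    refine ext_contract fun z => ?_
    have comm := h.lieDeriv_bracket y z f.toMultilinearMap
    have ih_contract := ih (f.curryLeft z)
    have hf := isSkew_alternatingMap f
    simp only [AlternatingMap.coe_multilinearMap] at comm
    simp only [← contract_alternatingMap] at ih_contract
    simp only [map_add, contract_lieDeriv, contract_ceDiff_succ _ _ hf,
      contract_ceDiff_succ _ _ (hf.lieDeriv y), map_sub, ceDiff_sub]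
    linear_combination (norm := abel) -comm - ih_contract

theorem IsCompatible.ceDiff_ceDiff (h : IsCompatible br br' ρ ρ') (hbr : ∀ x y, br x y = -br y x)
    (hbr' : ∀ x y, br' x y = -br' y x) (f : L [⋀^Fin n]→ₗ[k] M) :
    ceDiff br ρ (n + 1) (ceDiff br' ρ' n f) + ceDiff br' ρ' (n + 1) (ceDiff br ρ n f) = 0 := by
  induction n with
  | zero =>
    refine ext_contract fun y => ?_
    simp only [map_add, contract_ceDiff_succ _ _ (isSkew_ceDiff hbr ρ f),
      contract_ceDiff_succ _ _ (isSkew_ceDiff hbr' ρ' f), contract_ceDiff_zero]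
    rw [sub_add_sub_comm, h.lieDeriv_ceDiff, sub_self, map_zero]
  | succ n ih =>
    refine ext_contract fun y => ?_
    have ih_contract := ih (f.curryLeft y)
    simp only [← contract_alternatingMap] at ih_contract
    simp only [map_add, contract_ceDiff_succ _ _ (isSkew_ceDiff hbr ρ f),
      contract_ceDiff_succ _ _ (isSkew_ceDiff hbr' ρ' f),
      contract_ceDiff_succ _ _ (isSkew_alternatingMap f), ceDiff_sub]
    rw [sub_add_sub_comm, h.lieDeriv_ceDiff, map_zero]
    linear_combination (norm := abel) ih_contract

end Anticommutation

end Cochain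

theorem stmt_2_general {k L M : Type*} [Field k] [AddCommGroup L] [Module k L] [AddCommGroup M]
    [Module k M] (br br' : L → L → L) (ρ ρ' : L → Module.End k M)
    (hskew : ∀ x y, br x y = -br y x) (hskew' : ∀ x y, br' x y = -br' y x)
    (hcompat : ∀ x y z, br (br' x y) z + br' (br x y) z =
      br (br' x z) y + br' (br x z) y + br x (br' y z) + br' x (br y z))
    (hmix : ∀ x y, ρ (br' x y) + ρ' (br x y) =
      ρ x * ρ' y - ρ' y * ρ x + ρ' x * ρ y - ρ y * ρ' x)
    (n : ℕ) (f : L [⋀^Fin n]→ₗ[k] M) :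
    ceDiff br ρ (n + 1) (ceDiff br' ρ' n f) + ceDiff br' ρ' (n + 1) (ceDiff br ρ n f) = 0 := by
  have compatible : Cochain.IsCompatible br br' ρ ρ' :=
    { leibniz := fun x y z => by
        rw [hcompat, hskew _ y, hskew' _ y]
        abel
      action := fun x y => by rw [hmix, add_sub_assoc] }
  exact compatible.ceDiff_ceDiff hskew hskew' f

/-- For a compatible Lie algebra `(g,B,B')` with representation `(V,ρ,ρ')`, the
two Chevalley–Eilenberg differentials anticommute: `∂(∂'f) + ∂'(∂f) = 0` for every
alternating `n`-linear map `f : gⁿ → V`, `n ≥ 0`. -/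
theorem stmt_2
    (B B' : g →ₗ[K] g →ₗ[K] g) (ρ ρ' : g →ₗ[K] Module.End K V)
    (hBskew : ∀ x y : g, B x y = - B y x)
    (hB'skew : ∀ x y : g, B' x y = - B' y x)
    (hBjac : ∀ x y z : g, B (B x y) z + B (B y z) x + B (B z x) y = 0)
    (hB'jac : ∀ x y z : g, B' (B' x y) z + B' (B' y z) x + B' (B' z x) y = 0)
    (hcompat : ∀ x y z : g, B (B' x y) z + B' (B x y) z
      = B (B' x z) y + B' (B x z) y + B x (B' y z) + B' x (B y z))
    (hρ : ∀ x y : g, ρ (B x y) = ρ x * ρ y - ρ y * ρ x)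
    (hρ' : ∀ x y : g, ρ' (B' x y) = ρ' x * ρ' y - ρ' y * ρ' x)
    (hmix : ∀ x y : g, ρ (B' x y) + ρ' (B x y)
      = ρ x * ρ' y - ρ' y * ρ x + ρ' x * ρ y - ρ y * ρ' x)
    (n : ℕ) (f : AlternatingMap K g V (Fin n)) (x : Fin (n + 2) → g) :
    ceDiff (fun u v => B u v) (fun u => ρ u) (n + 1)
        (ceDiff (fun u v => B' u v) (fun u => ρ' u) n ⇑f) x
      + ceDiff (fun u v => B' u v) (fun u => ρ' u) (n + 1)
        (ceDiff (fun u v => B u v) (fun u => ρ u) n ⇑f) x = 0 := by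
  exact congrFun (stmt_2_general (fun u v => B u v) (fun u v => B' u v) (fun u => ρ u)
    (fun u => ρ' u) hBskew hB'skew hcompat hmix n f) x
end

section
/- Let (g,[·,·],[·,·]') be a compatible Lie algebra and (V,ρ,ρ') a representation of it, with Chevalley–Eilenberg differentials ∂ (for [·,·], ρ) and ∂' (for [·,·]', ρ'). For n ≥ 1 define C^n_c(g,V) as the direct sum of n copies of the space of alternating n-linear maps gⁿ → V, and define ∂_c: C^n_c(g,V) → C^{n+1}_c(g,V) by ∂_c(f₁,…,fₙ) = (∂f₁, ∂f₂ + ∂'f₁, …, ∂fᵢ + ∂'f_{i−1}, …, ∂'fₙ). Then ∂_c ∘ ∂_c = 0 as a map C^n_c(g,V) → C^{n+2}_c(g,V) for every n ≥ 1. -/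
variable {K : Type*} [Field K] [CharZero K]
variable {g V : Type*} [AddCommGroup g] [Module K g] [AddCommGroup V] [Module K V]

/-- The differential of the compatible cochain complex:
`∂_c(f₁,…,fₙ) = (∂f₁, ∂f₂ + ∂'f₁, …, ∂fᵢ + ∂'f_{i−1}, …, ∂'fₙ)`. -/
def compDiff (br br' : g → g → g) (ρ ρ' : g → Module.End K V) (n : ℕ)
    (F : Fin n → ((Fin n → g) → V)) : Fin (n + 1) → ((Fin (n + 1) → g) → V) :=
  fun i =>
    (if h : (i : ℕ) < n then ceDiff br ρ n (F ⟨(i : ℕ), h⟩) else 0) +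
    (if h : 0 < (i : ℕ) then
        ceDiff br' ρ' n (F ⟨(i : ℕ) - 1, by have := i.isLt; omega⟩) else 0)

/-!
Let `ι_x` be contraction with `x` and `θ_x` the Lie derivative. Cartan's formula
`ι_x ∂ = θ_x - ∂ ι_x` reduces statements about `∂` to cochains of lower degree: induction on the
degree shows first that `θ_x` commutes with `∂`, and then that `ι_x ∂² = ∂² ι_x`, so `∂² = 0`.

Compatibility says exactly that `[·,·] + [·,·]'` is again a Lie bracket, with representation
`ρ + ρ'`. Its differential is `∂ + ∂'`, so expanding `(∂ + ∂')² = 0` gives `∂∂' + ∂'∂ = 0`: the two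
differentials form a double complex, and `∂_c` is its total differential.
-/

namespace ChevalleyEilenberg

open AlternatingMap

section AlternatingMaps

variable {R M N : Type*} [CommRing R] [AddCommGroup M] [Module R M] [AddCommGroup N] [Module R N]
  {n : ℕ}

theorem ext_curryLeft {f₁ f₂ : M [⋀^Fin (n + 1)]→ₗ[R] N}
    (h : ∀ x, f₁.curryLeft x = f₂.curryLeft x) : f₁ = f₂ := by
  ext v
  simpa [Matrix.vecCons] using DFunLike.congr_fun (h (v 0)) (Fin.tail v)

theorem curryLeft_curryLeft_eq_neg (f : M [⋀^Fin (n + 2)]→ₗ[R] N) (x y : M) :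
    (f.curryLeft x).curryLeft y = -(f.curryLeft y).curryLeft x := by
  have h := f.curryLeft_same (x + y)
  simp only [map_add, curryLeft_add, LinearMap.add_apply, curryLeft_same, zero_add, add_zero] at h
  exact eq_neg_of_add_eq_zero_right h

theorem curryLeft_alternatizeUncurryFin (φ : M →ₗ[R] M [⋀^Fin (n + 1)]→ₗ[R] N) (x : M) :
    (alternatizeUncurryFin φ).curryLeft x =
      φ x - alternatizeUncurryFin (curryLeftLinearMap.flip x ∘ₗ φ) := by
  ext v
  have removeNth_succ_cons (i : Fin (n + 1)) :
      i.succ.removeNth (Fin.cons x v : Fin (n + 2) → M) = Fin.cons x (i.removeNth v) := by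
    ext k
    cases k using Fin.cases <;> simp [Fin.removeNth]
  simp [alternatizeUncurryFin_apply, Fin.sum_univ_succ (n := n + 1), Matrix.vecCons,
    removeNth_succ_cons, pow_succ, sub_eq_add_neg]

theorem sum_dite_lt_eq_sum_dite_le {A : Type*} [AddCommMonoid A]
    (a : ∀ i j : Fin (n + 1), (i : ℕ) < (j : ℕ) → A) :
    (∑ i : Fin (n + 1), ∑ j : Fin (n + 1), if h : (i : ℕ) < (j : ℕ) then a i j h else 0) =
      ∑ i : Fin n, ∑ j : Fin n,
        if h : i ≤ j then a i.castSucc j.succ (Nat.lt_succ_of_le h) else 0 := by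
  rw [Fin.sum_univ_castSucc]
  simp only [Fin.sum_univ_succ (n := n)]
  simp [Nat.not_le.mpr, Fin.is_lt]

theorem alternatizeUncurryFin_alternatizeUncurryFinLM_comp_of_skew
    {φ : M →ₗ[R] M →ₗ[R] M [⋀^Fin n]→ₗ[R] N} (hφ : ∀ x y, φ x y = -φ y x) (v : Fin (n + 2) → M) :
    alternatizeUncurryFin (alternatizeUncurryFinLM ∘ₗ φ) v =
      -((2 : R) • ∑ i : Fin (n + 2), ∑ j : Fin (n + 2),
        if h : (i : ℕ) < (j : ℕ) then
          (-1 : ℤ) ^ ((i : ℕ) + (j : ℕ)) • φ (v i) (v j) fun k ↦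
            v (j.succAbove ((i.castLT (h.trans_le (Nat.lt_succ_iff.mp j.isLt))).succAbove k))
        else 0) := by
  rw [alternatizeUncurryFin_alternatizeUncurryFinLM_comp_apply, sum_dite_lt_eq_sum_dite_le]
  simp only [Finset.smul_sum, ← Finset.sum_neg_distrib, ← Finset.filter_le_eq_Ici,
    Finset.sum_filter]
  refine Fintype.sum_congr _ _ fun i ↦ Fintype.sum_congr _ _ fun j ↦ ?_
  split_ifs with hij
  · have removeNth_comm : (fun k ↦ v (j.succ.succAbove (i.succAbove k))) =
        j.removeNth (i.castSucc.removeNth v) := by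
      have := Fin.removeNth_removeNth_eq_swap v i j.succ
      rwa [Fin.predAbove_succ_of_le _ _ hij,
        Fin.succAbove_of_castSucc_lt _ _ (by simpa using hij)] at this
    simp only [Fin.castLT_castSucc, removeNth_comm, hφ (v j.succ)]
    simp [two_smul, pow_succ, ← add_assoc]
  · simp

end AlternatingMaps

section CartanCalculus

variable {R L M : Type*} [CommRing R] [AddCommGroup L] [Module R L] [AddCommGroup M] [Module R M]
  {n : ℕ}

/-- The action of endomorphisms of the coefficient module on cochains, by postcomposition. -/
def coefficientAction : Module.End R M →ₗ[R] Module.End R (L [⋀^Fin n]→ₗ[R] M) :=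
  LinearMap.mk₂ R LinearMap.compAlternatingMap
    LinearMap.add_compAlternatingMap (fun c g f ↦ LinearMap.smul_compAlternatingMap g c f)
    LinearMap.compAlternatingMap_add (fun c g f ↦ LinearMap.compAlternatingMap_smul g c f)

/-- The derivation of the cochains extending precomposition with an endomorphism `T` of `L`:
`(T • f)(v₁, …, vₙ) = ∑ᵢ f(v₁, …, T vᵢ, …, vₙ)`, encoded as the alternatization of
`x ↦ ι_{T x} f`, where `ι` is contraction in the first argument. -/
def derivationAction : {n : ℕ} → Module.End R L →ₗ[R] Module.End R (L [⋀^Fin n]→ₗ[R] M)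
  | 0 => 0
  | _ + 1 => LinearMap.mk₂ R (fun T f ↦ alternatizeUncurryFin (f.curryLeft ∘ₗ T))
      (fun _ _ _ ↦ by rw [LinearMap.comp_add, alternatizeUncurryFin_add])
      (fun _ _ _ ↦ by rw [LinearMap.comp_smul, alternatizeUncurryFin_smul])
      (fun _ _ _ ↦ by rw [curryLeft_add, LinearMap.add_comp, alternatizeUncurryFin_add])
      (fun _ _ _ ↦ by rw [curryLeft_smul, LinearMap.smul_comp, alternatizeUncurryFin_smul])

theorem derivationAction_succ (T : Module.End R L) (f : L [⋀^Fin (n + 1)]→ₗ[R] M) :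
    derivationAction T f = alternatizeUncurryFin (f.curryLeft ∘ₗ T) := rfl

theorem curryLeft_derivationAction (T : Module.End R L) (f : L [⋀^Fin (n + 1)]→ₗ[R] M) (x : L) :
    (derivationAction T f).curryLeft x =
      derivationAction T (f.curryLeft x) + f.curryLeft (T x) := by
  cases n with
  | zero => ext v; simp [derivationAction, alternatizeUncurryFin_apply, Matrix.vecCons]
  | succ n =>
    have anticomm : curryLeftLinearMap.flip x ∘ₗ f.curryLeft ∘ₗ T =
        (-1 : R) • ((f.curryLeft x).curryLeft ∘ₗ T) := by
      ext1 y
      simpa using curryLeft_curryLeft_eq_neg f (T y) x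
    rw [derivationAction_succ, derivationAction_succ, curryLeft_alternatizeUncurryFin, anticomm,
      alternatizeUncurryFin_smul, neg_one_smul, sub_neg_eq_add]
    exact add_comm _ _

/-- The Lie derivative `θ_x` of cochains along `x : L`,
`(θ_x f)(v₁, …, vₙ) = ρ(x) f(v₁, …, vₙ) - ∑ᵢ f(v₁, …, [x, vᵢ], …, vₙ)`. -/
def lieDerivative (B : L →ₗ[R] L →ₗ[R] L) (ρ : L →ₗ[R] Module.End R M) :
    L →ₗ[R] Module.End R (L [⋀^Fin n]→ₗ[R] M) :=
  coefficientAction ∘ₗ ρ - derivationAction ∘ₗ B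

theorem curryLeft_lieDerivative (B : L →ₗ[R] L →ₗ[R] L) (ρ : L →ₗ[R] Module.End R M) (x y : L)
    (f : L [⋀^Fin (n + 1)]→ₗ[R] M) :
    (lieDerivative B ρ x f).curryLeft y =
      lieDerivative B ρ x (f.curryLeft y) - f.curryLeft (B x y) :=
  calc
    (lieDerivative B ρ x f).curryLeft y
        = coefficientAction (ρ x) (f.curryLeft y) - (derivationAction (B x) f).curryLeft y := rfl
    _ = lieDerivative B ρ x (f.curryLeft y) - f.curryLeft (B x y) := by
      rw [curryLeft_derivationAction, ← sub_sub]; rfl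

/-- `B` is a Lie bracket on `L` and `ρ` a representation of `(L, B)` on `M`. The bracket is a
variable bilinear map rather than a `LieRing` instance, so that brackets on `L` can be added. -/
structure IsLieRepresentation (B : L →ₗ[R] L →ₗ[R] L) (ρ : L →ₗ[R] Module.End R M) : Prop where
  isAlt : B.IsAlt
  bracket_bracket (x y z : L) : B (B x y) z = B x (B y z) - B y (B x z)
  map_bracket (x y : L) : ρ (B x y) = ρ x * ρ y - ρ y * ρ x

variable {B B' : L →ₗ[R] L →ₗ[R] L} {ρ ρ' : L →ₗ[R] Module.End R M}

theorem isAlt_of_skew [Invertible (2 : R)] {B : L →ₗ[R] L →ₗ[R] M}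
    (hskew : ∀ x y, B x y = -B y x) : B.IsAlt := fun x ↦ by
  have double : (2 : R) • B x x = 0 := by rw [two_smul, add_eq_zero_iff_eq_neg, ← hskew]
  rw [← invOf_smul_smul (2 : R) (B x x), double, smul_zero]

theorem IsLieRepresentation.of_skew_of_jacobi [Invertible (2 : R)] (hskew : ∀ x y, B x y = -B y x)
    (hjacobi : ∀ x y z, B (B x y) z + B (B y z) x + B (B z x) y = 0)
    (hmap : ∀ x y, ρ (B x y) = ρ x * ρ y - ρ y * ρ x) : IsLieRepresentation B ρ where
  isAlt := isAlt_of_skew hskew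
  bracket_bracket x y z := by
    have jacobi := hjacobi x y z
    rw [hskew (B y z) x, hskew (B z x) y, hskew z x, map_neg] at jacobi
    rw [← sub_eq_zero, ← jacobi]
    abel
  map_bracket := hmap

theorem IsLieRepresentation.add (h : IsLieRepresentation B ρ) (h' : IsLieRepresentation B' ρ')
    (hbracket : ∀ x y z, B (B' x y) z + B' (B x y) z =
      B (B' x z) y + B' (B x z) y + B x (B' y z) + B' x (B y z))
    (hmap : ∀ x y, ρ (B' x y) + ρ' (B x y) =
      ρ x * ρ' y - ρ' y * ρ x + ρ' x * ρ y - ρ y * ρ' x) :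
    IsLieRepresentation (B + B') (ρ + ρ') where
  isAlt x := by rw [LinearMap.add_apply, LinearMap.add_apply, h.isAlt x, h'.isAlt x, add_zero]
  bracket_bracket x y z := by
    have mixed := hbracket x y z
    rw [← h.isAlt.neg y (B' x z), ← h'.isAlt.neg y (B x z)] at mixed
    simp only [LinearMap.add_apply, map_add]
    linear_combination (norm := abel) h.bracket_bracket x y z + h'.bracket_bracket x y z + mixed
  map_bracket x y := by
    simp only [LinearMap.add_apply, map_add]
    linear_combination (norm := noncomm_ring) h.map_bracket x y + h'.map_bracket x y + hmap x y

theorem lieDerivative_bracket (h : IsLieRepresentation B ρ) (x y : L)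
    (f : L [⋀^Fin n]→ₗ[R] M) :
    lieDerivative B ρ (B x y) f = lieDerivative B ρ x (lieDerivative B ρ y f) -
      lieDerivative B ρ y (lieDerivative B ρ x f) := by
  induction n with
  | zero =>
    ext v
    simp [lieDerivative, derivationAction, coefficientAction, h.map_bracket]
  | succ n ih =>
    refine ext_curryLeft fun z ↦ ?_
    rw [← curryLeftLinearMap_apply (_ - _), map_sub]
    simp only [curryLeftLinearMap_apply, LinearMap.sub_apply, curryLeft_lieDerivative, ih,
      h.bracket_bracket, map_sub]
    abel

/-- The summand `∑ᵢ (-1)^i ρ(vᵢ) f(…, v̂ᵢ, …)` of the Chevalley–Eilenberg differential, with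
arguments numbered from `0`. -/
def coefficientDifferential (ρ : L →ₗ[R] Module.End R M) :
    (L [⋀^Fin n]→ₗ[R] M) →ₗ[R] (L [⋀^Fin (n + 1)]→ₗ[R] M) :=
  alternatizeUncurryFinLM ∘ₗ (coefficientAction ∘ₗ ρ).flip

/-- Minus twice the bracket summand `∑_{i < j} (-1)^(i + j) f([vᵢ, vⱼ], …)` of the
Chevalley–Eilenberg differential: alternatizing `x ↦ [x, -] • f` meets every pair `{i, j}` twice. -/
def doubledBracketDifferential (B : L →ₗ[R] L →ₗ[R] L) :
    (L [⋀^Fin n]→ₗ[R] M) →ₗ[R] (L [⋀^Fin (n + 1)]→ₗ[R] M) :=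
  alternatizeUncurryFinLM ∘ₗ (derivationAction ∘ₗ B).flip

theorem coefficientDifferential_apply (ρ : L →ₗ[R] Module.End R M) (f : L [⋀^Fin n]→ₗ[R] M)
    (v : Fin (n + 1) → L) :
    coefficientDifferential ρ f v =
      ∑ i : Fin (n + 1), (-1 : ℤ) ^ (i : ℕ) • ρ (v i) (f (i.removeNth v)) :=
  alternatizeUncurryFin_apply _ v

theorem doubledBracketDifferential_zero (f : L [⋀^Fin 0]→ₗ[R] M) :
    doubledBracketDifferential B f = 0 := by
  ext v
  simp [doubledBracketDifferential, derivationAction, alternatizeUncurryFin_apply]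

theorem doubledBracketDifferential_apply (hB : B.IsAlt) (f : L [⋀^Fin (n + 1)]→ₗ[R] M)
    (v : Fin (n + 2) → L) :
    doubledBracketDifferential B f v =
      -((2 : R) • ∑ i : Fin (n + 2), ∑ j : Fin (n + 2),
        if h : (i : ℕ) < (j : ℕ) then
          (-1 : ℤ) ^ ((i : ℕ) + (j : ℕ)) • f (Fin.cons (B (v i) (v j)) fun k ↦
            v (j.succAbove ((i.castLT (h.trans_le (Nat.lt_succ_iff.mp j.isLt))).succAbove k)))
        else 0) :=
  alternatizeUncurryFin_alternatizeUncurryFinLM_comp_of_skew (φ := B.compr₂ f.curryLeft)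
    (fun x y ↦ by simp [← hB.neg x y]) v

theorem curryLeft_coefficientDifferential (x : L) (f : L [⋀^Fin (n + 1)]→ₗ[R] M) :
    (coefficientDifferential ρ f).curryLeft x =
      coefficientAction (ρ x) f - coefficientDifferential ρ (f.curryLeft x) :=
  curryLeft_alternatizeUncurryFin _ x

theorem curryLeft_doubledBracketDifferential (hB : B.IsAlt) (x : L)
    (f : L [⋀^Fin (n + 1)]→ₗ[R] M) :
    (doubledBracketDifferential B f).curryLeft x =
      (2 : R) • derivationAction (B x) f - doubledBracketDifferential B (f.curryLeft x) := by
  have contract : curryLeftLinearMap.flip x ∘ₗ (derivationAction ∘ₗ B).flip f =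
      (derivationAction ∘ₗ B).flip (f.curryLeft x) + (-1 : R) • f.curryLeft ∘ₗ B x := by
    ext1 y
    have swap : f.curryLeft (B y x) = -f.curryLeft (B x y) := by rw [← map_neg, hB.neg]
    simpa [swap] using curryLeft_derivationAction (B y) f x
  have h := curryLeft_alternatizeUncurryFin ((derivationAction ∘ₗ B).flip f) x
  rw [contract, alternatizeUncurryFin_add, alternatizeUncurryFin_smul, ← derivationAction_succ,
    neg_one_smul, ← sub_eq_add_neg, ← sub_add, sub_add_eq_add_sub] at h
  rw [two_smul]
  exact h

section Differential

variable [Invertible (2 : R)]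

/-- The Chevalley–Eilenberg differential `∂` of alternating cochains; the factor `½` undoes the
double count in `doubledBracketDifferential`. -/
def differential (B : L →ₗ[R] L →ₗ[R] L) (ρ : L →ₗ[R] Module.End R M) :
    (L [⋀^Fin n]→ₗ[R] M) →ₗ[R] (L [⋀^Fin (n + 1)]→ₗ[R] M) :=
  coefficientDifferential ρ - (⅟2 : R) • doubledBracketDifferential B

theorem differential_add_add (f : L [⋀^Fin n]→ₗ[R] M) :
    differential (B + B') (ρ + ρ') f = differential B ρ f + differential B' ρ' f := by
  have coeff : coefficientDifferential (ρ + ρ') f =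
      coefficientDifferential ρ f + coefficientDifferential ρ' f := by
    ext v
    simp [coefficientDifferential_apply, Finset.sum_add_distrib]
  have bracket : doubledBracketDifferential (B + B') f =
      doubledBracketDifferential B f + doubledBracketDifferential B' f := by
    ext v
    simp [doubledBracketDifferential, alternatizeUncurryFin_apply, Finset.sum_add_distrib]
  simp only [differential, LinearMap.sub_apply, LinearMap.smul_apply, coeff, bracket, smul_add]
  abel

theorem curryLeft_differential_zero (x : L) (f : L [⋀^Fin 0]→ₗ[R] M) :
    (differential B ρ f).curryLeft x = lieDerivative B ρ x f := by
  ext v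
  simp [differential, doubledBracketDifferential_zero, coefficientDifferential_apply,
    lieDerivative, derivationAction, coefficientAction]

theorem curryLeft_differential_succ (hB : B.IsAlt) (x : L) (f : L [⋀^Fin (n + 1)]→ₗ[R] M) :
    (differential B ρ f).curryLeft x =
      lieDerivative B ρ x f - differential B ρ (f.curryLeft x) :=
  calc
    (differential B ρ f).curryLeft x
        = (coefficientDifferential ρ f).curryLeft x -
            (⅟2 : R) • (doubledBracketDifferential B f).curryLeft x := rfl
    _ = coefficientAction (ρ x) f - derivationAction (B x) f -
          differential B ρ (f.curryLeft x) := by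
      rw [curryLeft_coefficientDifferential, curryLeft_doubledBracketDifferential hB, smul_sub,
        invOf_smul_smul, sub_sub_sub_comm]
      rfl

theorem lieDerivative_differential (h : IsLieRepresentation B ρ) (x : L)
    (f : L [⋀^Fin n]→ₗ[R] M) :
    lieDerivative B ρ x (differential B ρ f) = differential B ρ (lieDerivative B ρ x f) := by
  induction n with
  | zero =>
    refine ext_curryLeft fun y ↦ ?_
    simp only [curryLeft_lieDerivative, curryLeft_differential_zero, lieDerivative_bracket h]
    abel
  | succ n ih =>
    refine ext_curryLeft fun y ↦ ?_
    simp only [curryLeft_lieDerivative, curryLeft_differential_succ h.isAlt,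
      lieDerivative_bracket h, map_sub, ih]
    abel

theorem differential_differential (h : IsLieRepresentation B ρ) (f : L [⋀^Fin n]→ₗ[R] M) :
    differential B ρ (differential B ρ f) = 0 := by
  induction n with
  | zero =>
    refine ext_curryLeft fun x ↦ ?_
    rw [curryLeft_differential_succ h.isAlt, curryLeft_differential_zero,
      lieDerivative_differential h, sub_self, curryLeft_zero, LinearMap.zero_apply]
  | succ n ih =>
    refine ext_curryLeft fun x ↦ ?_
    rw [curryLeft_differential_succ h.isAlt, curryLeft_differential_succ h.isAlt,
      map_sub, ih, lieDerivative_differential h, sub_zero, sub_self, curryLeft_zero,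
      LinearMap.zero_apply]

theorem differential_anticomm (h : IsLieRepresentation B ρ) (h' : IsLieRepresentation B' ρ')
    (hadd : IsLieRepresentation (B + B') (ρ + ρ')) (f : L [⋀^Fin n]→ₗ[R] M) :
    differential B ρ (differential B' ρ' f) + differential B' ρ' (differential B ρ f) = 0 := by
  have square := differential_differential hadd f
  simpa only [differential_add_add, map_add, differential_differential h,
    differential_differential h', zero_add, add_zero, add_comm] using square

end Differential

end CartanCalculus

section TotalDifferential

variable {A₀ A₁ A₂ : Type*} [AddCommMonoid A₀] [AddCommMonoid A₁] [AddCommMonoid A₂] {n : ℕ}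

/-- The total differential `(d f₁, d f₂ + d' f₁, …, d fₙ + d' fₙ₋₁, d' fₙ)` of `(f₁, …, fₙ)`, for
a double complex with differentials `d` and `d'` whose objects depend only on the total degree. -/
def totalDifferential (d d' : A₀ →+ A₁) (F : Fin n → A₀) : Fin (n + 1) → A₁ :=
  Fin.snoc (d ∘ F) 0 + Fin.cons 0 (d' ∘ F)

theorem totalDifferential_apply (d d' : A₀ →+ A₁) (F : Fin n → A₀) (i : Fin (n + 1)) :
    totalDifferential d d' F i =
      (if h : (i : ℕ) < n then d (F ⟨i, h⟩) else 0) +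
        if h : 0 < (i : ℕ) then d' (F ⟨i - 1, by omega⟩) else 0 := by
  rw [totalDifferential, Pi.add_apply]
  congr 1
  cases i using Fin.cases <;> simp

theorem totalDifferential_totalDifferential {d d' : A₀ →+ A₁} {e e' : A₁ →+ A₂}
    (hed : ∀ a, e (d a) = 0) (hed' : ∀ a, e' (d' a) = 0)
    (hmixed : ∀ a, e (d' a) + e' (d a) = 0) (F : Fin n → A₀) :
    totalDifferential e e' (totalDifferential d d' F) = 0 := by
  have map_total (c : A₁ →+ A₂) : c ∘ totalDifferential d d' F =
      Fin.snoc (c ∘ d ∘ F) 0 + Fin.cons 0 (c ∘ d' ∘ F) := by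
    simp only [totalDifferential, ← map_zero c, ← Fin.comp_snoc, ← Fin.comp_cons]
    funext i
    exact map_add c _ _
  have diagonal : e ∘ d ∘ F = 0 := funext fun i ↦ hed (F i)
  have diagonal' : e' ∘ d' ∘ F = 0 := funext fun i ↦ hed' (F i)
  have snoc_zero : (Fin.snoc (0 : Fin n → A₂) 0 : Fin (n + 1) → A₂) = 0 := by
    ext i; cases i using Fin.lastCases <;> simp
  have cons_zero : (Fin.cons 0 (0 : Fin n → A₂) : Fin (n + 1) → A₂) = 0 := by
    ext i; cases i using Fin.cases <;> simp
  rw [totalDifferential, map_total, map_total, diagonal, diagonal', snoc_zero, cons_zero, zero_add,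
    add_zero, ← Fin.cons_snoc_eq_snoc_cons]
  ext i
  cases i using Fin.cases with
  | zero => simp
  | succ i => cases i using Fin.lastCases <;> simp [hmixed]

end TotalDifferential

section ExplicitFormula

theorem coe_differential {B : g →ₗ[K] g →ₗ[K] g} (hB : B.IsAlt) (ρ : g →ₗ[K] Module.End K V)
    {n : ℕ} (f : g [⋀^Fin n]→ₗ[K] V) :
    ⇑(differential B ρ f) = ceDiff (fun u v ↦ B u v) (fun u ↦ ρ u) n f := by
  funext v
  cases n with
  | zero =>
    simp [differential, doubledBracketDifferential_zero, coefficientDifferential_apply, ceDiff,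
      Subsingleton.elim _ Fin.elim0]
  | succ n =>
    simp only [differential, LinearMap.sub_apply, LinearMap.smul_apply, AlternatingMap.sub_apply,
      AlternatingMap.smul_apply, coefficientDifferential_apply,
      doubledBracketDifferential_apply hB, smul_neg, invOf_smul_smul, sub_neg_eq_add]
    rfl

theorem compDiff_coe {B B' : g →ₗ[K] g →ₗ[K] g} (hB : B.IsAlt) (hB' : B'.IsAlt)
    (ρ ρ' : g →ₗ[K] Module.End K V) {n : ℕ} (F : Fin n → g [⋀^Fin n]→ₗ[K] V) :
    compDiff (fun u v ↦ B u v) (fun u v ↦ B' u v) (fun u ↦ ρ u) (fun u ↦ ρ' u) n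
        (fun j ↦ ⇑(F j)) =
      fun i ↦ ⇑(totalDifferential (differential B ρ).toAddMonoidHom
        (differential B' ρ').toAddMonoidHom F i) := by
  funext i
  simp only [compDiff, ← coe_differential hB, ← coe_differential hB']
  rw [totalDifferential_apply]
  split_ifs <;> rfl

end ExplicitFormula

end ChevalleyEilenberg

open ChevalleyEilenberg

theorem stmt_3_general {R L M : Type*} [CommRing R] [Invertible (2 : R)] [AddCommGroup L]
    [Module R L] [AddCommGroup M] [Module R M]
    {B B' : L →ₗ[R] L →ₗ[R] L} {ρ ρ' : L →ₗ[R] Module.End R M}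
    (hBskew : ∀ x y, B x y = -B y x) (hB'skew : ∀ x y, B' x y = -B' y x)
    (hBjac : ∀ x y z, B (B x y) z + B (B y z) x + B (B z x) y = 0)
    (hB'jac : ∀ x y z, B' (B' x y) z + B' (B' y z) x + B' (B' z x) y = 0)
    (hcompat : ∀ x y z, B (B' x y) z + B' (B x y) z =
      B (B' x z) y + B' (B x z) y + B x (B' y z) + B' x (B y z))
    (hρ : ∀ x y, ρ (B x y) = ρ x * ρ y - ρ y * ρ x)
    (hρ' : ∀ x y, ρ' (B' x y) = ρ' x * ρ' y - ρ' y * ρ' x)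
    (hmix : ∀ x y, ρ (B' x y) + ρ' (B x y) =
      ρ x * ρ' y - ρ' y * ρ x + ρ' x * ρ y - ρ y * ρ' x)
    {n m : ℕ} (F : Fin m → L [⋀^Fin n]→ₗ[R] M) :
    totalDifferential (differential B ρ).toAddMonoidHom (differential B' ρ').toAddMonoidHom
      (totalDifferential (differential B ρ).toAddMonoidHom (differential B' ρ').toAddMonoidHom F) =
        0 :=
  have h := IsLieRepresentation.of_skew_of_jacobi hBskew hBjac hρ
  have h' := IsLieRepresentation.of_skew_of_jacobi hB'skew hB'jac hρ'
  have hadd := h.add h' hcompat hmix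
  totalDifferential_totalDifferential (differential_differential h) (differential_differential h')
    (differential_anticomm h h' hadd) F

/-- `∂_c ∘ ∂_c = 0` on the compatible cochain complex of a compatible Lie
algebra with coefficients in a representation, for every `n ≥ 1`. -/
theorem stmt_3
    (B B' : g →ₗ[K] g →ₗ[K] g) (ρ ρ' : g →ₗ[K] Module.End K V)
    (hBskew : ∀ x y : g, B x y = - B y x)
    (hB'skew : ∀ x y : g, B' x y = - B' y x)
    (hBjac : ∀ x y z : g, B (B x y) z + B (B y z) x + B (B z x) y = 0)
    (hB'jac : ∀ x y z : g, B' (B' x y) z + B' (B' y z) x + B' (B' z x) y = 0)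
    (hcompat : ∀ x y z : g, B (B' x y) z + B' (B x y) z
      = B (B' x z) y + B' (B x z) y + B x (B' y z) + B' x (B y z))
    (hρ : ∀ x y : g, ρ (B x y) = ρ x * ρ y - ρ y * ρ x)
    (hρ' : ∀ x y : g, ρ' (B' x y) = ρ' x * ρ' y - ρ' y * ρ' x)
    (hmix : ∀ x y : g, ρ (B' x y) + ρ' (B x y)
      = ρ x * ρ' y - ρ' y * ρ x + ρ' x * ρ y - ρ y * ρ' x)
    (n : ℕ) (hn : 1 ≤ n) (F : Fin n → AlternatingMap K g V (Fin n))
    (i : Fin (n + 2)) (x : Fin (n + 2) → g) :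
    compDiff (fun u v => B u v) (fun u v => B' u v) (fun u => ρ u) (fun u => ρ' u) (n + 1)
      (compDiff (fun u v => B u v) (fun u v => B' u v) (fun u => ρ u) (fun u => ρ' u) n
        (fun j => ⇑(F j))) i x = 0 := by
  have hB := isAlt_of_skew hBskew
  have hB' := isAlt_of_skew hB'skew
  rw [compDiff_coe hB hB', compDiff_coe hB hB',
    stmt_3_general hBskew hB'skew hBjac hB'jac hcompat hρ hρ' hmix F]
  rfl
end

section
/- Let (g,[·,·],[·,·]') be a compatible Lie algebra, and let μ, μ' ∈ Hom(∧²g, g) denote the two brackets regarded as skew-symmetric bilinear maps. Then for every m ≥ 0 and every alternating (m+1)-linear map f: g^{m+1} → g, one has [μ, [μ', f]_NR]_NR + [μ', [μ, f]_NR]_NR = 0; that is, the operators ∂_μ = [μ,−]_NR and ∂_{μ'} = [μ',−]_NR on alternating multilinear maps anticommute. -/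
variable {K : Type*} [Field K] [CharZero K]
variable {g : Type*} [AddCommGroup g] [Module K g]

/-- The operation `f ⋄ h` for an `(m+1)`-linear map `f` and an `(n+1)`-linear map `h`:
`(f ⋄ h)(x₁,…,x_{m+n+1}) = Σ_{σ ∈ Sh(n+1,m)} sgn(σ)
  f(h(x_{σ(1)},…,x_{σ(n+1)}), x_{σ(n+2)},…,x_{σ(m+n+1)})`,
where the sum is over permutations that are strictly increasing on the first `n+1` and on
the last `m` positions. -/
def diamond (m n : ℕ) (f : (Fin (m + 1) → g) → g) (h : (Fin (n + 1) → g) → g) :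
    (Fin (m + n + 1) → g) → g :=
  fun x =>
    ∑ σ ∈ Finset.univ.filter (fun σ : Equiv.Perm (Fin (m + n + 1)) =>
        (∀ i j : Fin (m + n + 1), i < j → (j : ℕ) < n + 1 → σ i < σ j) ∧
        (∀ i j : Fin (m + n + 1), i < j → n + 1 ≤ (i : ℕ) → σ i < σ j)),
      (Equiv.Perm.sign σ : ℤ) •
        f (Fin.cons (h (fun k : Fin (n + 1) => x (σ (Fin.castLE (by omega) k))))
          (fun k : Fin m => x (σ ⟨n + 1 + (k : ℕ), by have := k.isLt; omega⟩)))

/-- The Nijenhuis–Richardson bracket `[f,h]_NR = f ⋄ h − (−1)^{mn} h ⋄ f` of an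
`(m+1)`-linear map `f` and an `(n+1)`-linear map `h`. -/
def nrNR (m n : ℕ) (f : (Fin (m + 1) → g) → g) (h : (Fin (n + 1) → g) → g) :
    (Fin (m + n + 1) → g) → g :=
  fun x =>
    diamond m n f h x -
      ((-1 : ℤ) ^ (m * n)) •
        diamond n m h f (fun i => x (Fin.cast (by omega) i))

/-! Up to the sign `(-1) ^ n`, the operator `[μ, -]_NR` on alternating `(n + 1)`-linear maps is the
Chevalley–Eilenberg differential `d` of `μ` with adjoint coefficients. It satisfies Cartan's formula
`ι_y d = L_y - d ι_y`, where `ι_y` inserts `y` and `L_y` is the action of `[y, ·]` as an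
endomorphism. Compatibility of `μ` and `μ'` gives
`[L_y, L'_z] + [L'_y, L_z] = L_{[y, z]'} + L'_{[y, z]}`. Inserting a vector and inducting on the
degree, one gets first `L_y d' + L'_y d = d L'_y + d' L_y`, and then `d d' + d' d = 0`. -/

section ChevalleyEilenberg

variable {R M N : Type*} [CommRing R] [AddCommGroup M] [Module R M] [AddCommGroup N] [Module R N]
  {n : ℕ}

open AlternatingMap (alternatizeUncurryFin alternatizeUncurryFinLM)

/-- The interior product `ι_w f = f(w, ·, …, ·)`, as a bilinear map. -/
def interiorProduct : M →ₗ[R] (M [⋀^Fin (n + 1)]→ₗ[R] N) →ₗ[R] M [⋀^Fin n]→ₗ[R] N :=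
  AlternatingMap.curryLeftLinearMap.flip

lemma interiorProduct_apply (w : M) (f : M [⋀^Fin (n + 1)]→ₗ[R] N) (v : Fin n → M) :
    interiorProduct w f v = f (Matrix.vecCons w v) :=
  rfl

lemma interiorProduct_anticomm (v w : M) (f : M [⋀^Fin (n + 2)]→ₗ[R] N) :
    interiorProduct v (interiorProduct w f) = -interiorProduct w (interiorProduct v f) := by
  have self (u : M) : interiorProduct u (interiorProduct u f) = 0 := f.curryLeft_same u
  have polarized := self (v + w)
  simp only [map_add, LinearMap.add_apply, self, zero_add, add_zero] at polarized
  exact eq_neg_of_add_eq_zero_right polarized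

lemma ext_interiorProduct {f f' : M [⋀^Fin (n + 1)]→ₗ[R] N}
    (h : ∀ w, interiorProduct w f = interiorProduct w f') : f = f' := by
  ext v
  rw [← Matrix.cons_head_tail v]
  exact DFunLike.congr_fun (h _) _

lemma interiorProduct_alternatizeUncurryFin_zero (G : M →ₗ[R] M [⋀^Fin 0]→ₗ[R] N) (w : M) :
    interiorProduct w (alternatizeUncurryFin G) = G w := by
  ext v
  simp [interiorProduct_apply, AlternatingMap.alternatizeUncurryFin_apply, Subsingleton.elim _ v]

lemma interiorProduct_alternatizeUncurryFin (G : M →ₗ[R] M [⋀^Fin (n + 1)]→ₗ[R] N) (w : M) :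
    interiorProduct w (alternatizeUncurryFin G) =
      G w - alternatizeUncurryFin (interiorProduct w ∘ₗ G) := by
  ext v
  have removeNth_succ_cons (i : Fin (n + 1)) :
      i.succ.removeNth (Matrix.vecCons w v) = Matrix.vecCons w (i.removeNth v) := by
    ext k; cases k using Fin.cases <;> simp [Fin.removeNth_apply]
  simp [interiorProduct_apply, AlternatingMap.alternatizeUncurryFin_apply, Fin.sum_univ_succ,
    pow_succ, removeNth_succ_cons, sub_eq_add_neg]

/-- The derivation `f ↦ ∑ i, f(v₁, …, φ vᵢ, …, vₙ)` of alternating maps induced by an endomorphism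
`φ`. In positive degree the sum is encoded as `∑ i, (-1) ^ i • f(φ vᵢ, v₁, …, v̂ᵢ, …, vₙ)`. -/
def substDerivation :
    {n : ℕ} → Module.End R M →ₗ[R] (M [⋀^Fin n]→ₗ[R] N) →ₗ[R] M [⋀^Fin n]→ₗ[R] N
  | 0 => 0
  | _ + 1 => LinearMap.mk₂ R (fun φ f ↦ alternatizeUncurryFin (f.curryLeft ∘ₗ φ))
      (by simp [LinearMap.comp_add]) (by simp [LinearMap.comp_smul])
      (by simp [LinearMap.add_comp]) (by simp [LinearMap.smul_comp])

lemma substDerivation_zero (φ : Module.End R M) (f : M [⋀^Fin 0]→ₗ[R] N) :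
    substDerivation φ f = 0 :=
  rfl

lemma substDerivation_succ (φ : Module.End R M) (f : M [⋀^Fin (n + 1)]→ₗ[R] N) :
    substDerivation φ f = alternatizeUncurryFin (f.curryLeft ∘ₗ φ) :=
  rfl

lemma interiorProduct_substDerivation (φ : Module.End R M) (f : M [⋀^Fin (n + 1)]→ₗ[R] N) (w : M) :
    interiorProduct w (substDerivation φ f) =
      interiorProduct (φ w) f + substDerivation φ (interiorProduct w f) := by
  cases n with
  | zero =>
    rw [substDerivation_succ, interiorProduct_alternatizeUncurryFin_zero, substDerivation_zero,
      add_zero]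
    rfl
  | succ n =>
    have anticomm : interiorProduct w ∘ₗ f.curryLeft ∘ₗ φ =
        -((interiorProduct w f).curryLeft ∘ₗ φ) :=
      LinearMap.ext fun v ↦ interiorProduct_anticomm w (φ v) f
    rw [substDerivation_succ, substDerivation_succ, interiorProduct_alternatizeUncurryFin,
      anticomm, ← neg_one_smul ℤ, AlternatingMap.alternatizeUncurryFin_smul, neg_one_smul,
      sub_neg_eq_add]
    rfl

/-- `LinearMap.compAlternatingMap` as a bilinear map. -/
def compAlternatingMapBilin :
    Module.End R N →ₗ[R] (M [⋀^Fin n]→ₗ[R] N) →ₗ[R] M [⋀^Fin n]→ₗ[R] N :=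
  LinearMap.mk₂ R LinearMap.compAlternatingMap (fun _ _ _ ↦ rfl) (fun _ _ _ ↦ rfl)
    LinearMap.compAlternatingMap_add (fun c φ f ↦ φ.compAlternatingMap_smul c f)

lemma interiorProduct_compAlternatingMapBilin (φ : Module.End R N)
    (f : M [⋀^Fin (n + 1)]→ₗ[R] N) (w : M) :
    interiorProduct w (compAlternatingMapBilin φ f) =
      compAlternatingMapBilin φ (interiorProduct w f) :=
  rfl

/-- The infinitesimal action `φ · f = φ ∘ f - ∑ i, f(v₁, …, φ vᵢ, …, vₙ)` of `gl(M)` on alternating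
maps from `M` to itself. For `φ = [y, ·]` it is the Lie derivative along `y`. -/
def endAction : Module.End R M →ₗ[R] (M [⋀^Fin n]→ₗ[R] M) →ₗ[R] M [⋀^Fin n]→ₗ[R] M :=
  compAlternatingMapBilin - substDerivation

lemma interiorProduct_endAction (φ : Module.End R M) (f : M [⋀^Fin (n + 1)]→ₗ[R] M) (w : M) :
    interiorProduct w (endAction φ f) =
      endAction φ (interiorProduct w f) - interiorProduct (φ w) f := by
  simp only [endAction, LinearMap.sub_apply, map_sub, interiorProduct_substDerivation,
    interiorProduct_compAlternatingMapBilin]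
  abel

theorem endAction_lie (φ ψ : Module.End R M) (f : M [⋀^Fin n]→ₗ[R] M) :
    endAction ⁅φ, ψ⁆ f = endAction φ (endAction ψ f) - endAction ψ (endAction φ f) := by
  induction n with
  | zero =>
    simp only [endAction, LinearMap.sub_apply, substDerivation_zero, sub_zero]
    rfl
  | succ n ih =>
    have lie_apply (w : M) : ⁅φ, ψ⁆ w = φ (ψ w) - ψ (φ w) := rfl
    refine ext_interiorProduct fun w ↦ ?_
    simp only [interiorProduct_endAction, map_sub, ih, lie_apply, LinearMap.sub_apply]
    abel

lemma endAction_lie_add_lie {B B' : M →ₗ[R] Module.End R M}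
    (hBB' : ∀ y z, ⁅B y, B' z⁆ + ⁅B' y, B z⁆ = B (B' y z) + B' (B y z))
    (y z : M) (f : M [⋀^Fin n]→ₗ[R] M) :
    endAction (B y) (endAction (B' z) f) - endAction (B' z) (endAction (B y) f) +
        (endAction (B' y) (endAction (B z) f) - endAction (B z) (endAction (B' y) f)) =
      endAction (B (B' y z)) f + endAction (B' (B y z)) f := by
  simp only [← endAction_lie, ← LinearMap.add_apply, ← map_add, hBB']

lemma lie_add_lie_of_compatible {B B' : M →ₗ[R] Module.End R M}
    (hB : ∀ x y, B x y = -B y x) (hB' : ∀ x y, B' x y = -B' y x)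
    (hcompat : ∀ x y z, B (B' x y) z + B' (B x y) z =
      B (B' x z) y + B' (B x z) y + B x (B' y z) + B' x (B y z)) (y z : M) :
    ⁅B y, B' z⁆ + ⁅B' y, B z⁆ = B (B' y z) + B' (B y z) := by
  ext w
  have compat := hcompat y z w
  rw [hB (B' y w) z, hB' (B y w) z] at compat
  change B y (B' z w) - B' z (B y w) + (B' y (B z w) - B z (B' y w)) = B (B' y z) w + B' (B y z) w
  rw [compat]
  abel

section Differential

variable [Invertible (2 : R)]

/-- The Chevalley–Eilenberg differential
`d f(v₀, …, vₙ) = ∑ i, (-1) ^ i • [vᵢ, f(…, v̂ᵢ, …)] + ∑ i < j, ± f([vᵢ, vⱼ], …, v̂ᵢ, …, v̂ⱼ, …)`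
with adjoint coefficients of a bilinear bracket `B`.
Alternatizing `y ↦ substDerivation (B y) f` counts each pair `{i, j}` twice, hence the `⅟2`. -/
def chevalleyEilenberg (B : M →ₗ[R] Module.End R M) :
    (M [⋀^Fin n]→ₗ[R] M) →ₗ[R] M [⋀^Fin (n + 1)]→ₗ[R] M :=
  alternatizeUncurryFinLM ∘ₗ
    ((compAlternatingMapBilin - ⅟(2 : R) • substDerivation) ∘ₗ B).flip

lemma interiorProduct_chevalleyEilenberg_zero (B : M →ₗ[R] Module.End R M)
    (f : M [⋀^Fin 0]→ₗ[R] M) (w : M) :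
    interiorProduct w (chevalleyEilenberg B f) = endAction (B w) f := by
  refine (interiorProduct_alternatizeUncurryFin_zero _ w).trans ?_
  simp [endAction, substDerivation_zero]

theorem interiorProduct_chevalleyEilenberg {B : M →ₗ[R] Module.End R M}
    (hB : ∀ x y, B x y = -B y x) (f : M [⋀^Fin (n + 1)]→ₗ[R] M) (w : M) :
    interiorProduct w (chevalleyEilenberg B f) =
      endAction (B w) f - chevalleyEilenberg B (interiorProduct w f) := by
  have interiorProduct_comp :
      interiorProduct w ∘ₗ ((compAlternatingMapBilin - ⅟(2 : R) • substDerivation) ∘ₗ B).flip f =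
        ((compAlternatingMapBilin - ⅟(2 : R) • substDerivation) ∘ₗ B).flip (interiorProduct w f) +
          ⅟(2 : R) • f.curryLeft ∘ₗ B w := by
    ext1 y
    have flip_bracket : interiorProduct (B y w) f = -f.curryLeft (B w y) := by
      rw [hB y w, map_neg]; rfl
    simp only [LinearMap.comp_apply, LinearMap.flip_apply, LinearMap.sub_apply, LinearMap.add_apply,
      LinearMap.smul_apply, map_sub, map_smul, smul_add, smul_neg, interiorProduct_substDerivation,
      interiorProduct_compAlternatingMapBilin, flip_bracket]
    abel
  refine (interiorProduct_alternatizeUncurryFin _ w).trans ?_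
  rw [interiorProduct_comp, AlternatingMap.alternatizeUncurryFin_add,
    AlternatingMap.alternatizeUncurryFin_smul, ← substDerivation_succ]
  have half_add_half := invOf_two_smul_add_invOf_two_smul R (substDerivation (B w) f)
  simp only [endAction, chevalleyEilenberg, LinearMap.flip_apply, LinearMap.comp_apply,
    LinearMap.sub_apply, LinearMap.smul_apply, AlternatingMap.alternatizeUncurryFinLM_apply]
  linear_combination (norm := abel) -half_add_half

variable {B B' : M →ₗ[R] Module.End R M}

theorem endAction_chevalleyEilenberg (hB : ∀ x y, B x y = -B y x) (hB' : ∀ x y, B' x y = -B' y x)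
    (hBB' : ∀ y z, ⁅B y, B' z⁆ + ⁅B' y, B z⁆ = B (B' y z) + B' (B y z))
    (y : M) (f : M [⋀^Fin n]→ₗ[R] M) :
    endAction (B y) (chevalleyEilenberg B' f) + endAction (B' y) (chevalleyEilenberg B f) =
      chevalleyEilenberg B (endAction (B' y) f) + chevalleyEilenberg B' (endAction (B y) f) := by
  induction n with
  | zero =>
    refine ext_interiorProduct fun z ↦ ?_
    simp only [map_add, interiorProduct_endAction, interiorProduct_chevalleyEilenberg_zero]
    linear_combination (norm := abel) endAction_lie_add_lie hBB' y z f
  | succ n ih =>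
    refine ext_interiorProduct fun z ↦ ?_
    simp only [map_add, map_sub, interiorProduct_endAction,
      interiorProduct_chevalleyEilenberg hB, interiorProduct_chevalleyEilenberg hB']
    linear_combination (norm := abel)
      endAction_lie_add_lie hBB' y z f - ih (interiorProduct z f)

theorem chevalleyEilenberg_anticomm (hB : ∀ x y, B x y = -B y x) (hB' : ∀ x y, B' x y = -B' y x)
    (hBB' : ∀ y z, ⁅B y, B' z⁆ + ⁅B' y, B z⁆ = B (B' y z) + B' (B y z))
    (f : M [⋀^Fin n]→ₗ[R] M) :
    chevalleyEilenberg B (chevalleyEilenberg B' f) +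
      chevalleyEilenberg B' (chevalleyEilenberg B f) = 0 := by
  induction n with
  | zero =>
    refine ext_interiorProduct fun z ↦ ?_
    simp only [map_add, interiorProduct_chevalleyEilenberg hB,
      interiorProduct_chevalleyEilenberg hB', interiorProduct_chevalleyEilenberg_zero, map_zero]
    linear_combination (norm := abel) endAction_chevalleyEilenberg hB hB' hBB' z f
  | succ n ih =>
    refine ext_interiorProduct fun z ↦ ?_
    simp only [map_add, map_sub, interiorProduct_chevalleyEilenberg hB,
      interiorProduct_chevalleyEilenberg hB', map_zero]
    linear_combination (norm := abel)
      endAction_chevalleyEilenberg hB hB' hBB' z f + ih (interiorProduct z f)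

end Differential

end ChevalleyEilenberg

section Shuffles

lemma perm_eq_of_strictMonoOn_of_eqOn_compl {α : Type*} [LinearOrder α] [WellFoundedLT α]
    {s : Set α} {σ τ : Equiv.Perm α} (hσ : StrictMonoOn σ s) (hτ : StrictMonoOn τ s)
    (h : Set.EqOn σ τ sᶜ) : σ = τ := by
  have image_eq : σ '' s = τ '' s := by
    rw [← compl_inj_iff, ← Set.image_compl_eq σ.bijective, ← Set.image_compl_eq τ.bijective,
      h.image_eq]
  have restrict_eq : s.domRestrict σ = s.domRestrict τ := by
    rw [← hσ.domRestrict.range_inj hτ.domRestrict, Set.range_domRestrict, Set.range_domRestrict,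
      image_eq]
  have eqOn : Set.EqOn σ τ s := Set.domRestrict_eq_domRestrict_iff.1 restrict_eq
  exact Equiv.ext fun i ↦ (em (i ∈ s)).elim (fun hi ↦ eqOn hi) fun hi ↦ h hi

variable {n : ℕ}

/-- The set `Sh(p, N - p)` of shuffles, as permutations of `Fin N`. -/
def shuffles (p N : ℕ) : Finset (Equiv.Perm (Fin N)) :=
  Finset.univ.filter fun σ ↦
    (∀ i j : Fin N, i < j → (j : ℕ) < p → σ i < σ j) ∧
      ∀ i j : Fin N, i < j → p ≤ (i : ℕ) → σ i < σ j

lemma diamond_eq_sum_shuffles {m n N : ℕ} (hN : m + n + 1 = N) (f : (Fin (m + 1) → g) → g)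
    (h : (Fin (n + 1) → g) → g) (x : Fin (m + n + 1) → g) :
    diamond m n f h x = ∑ σ ∈ shuffles (n + 1) N, (Equiv.Perm.sign σ : ℤ) •
      f (Fin.cons (h fun k ↦ x (Fin.cast hN.symm (σ (Fin.castLE (by omega) k))))
        fun k : Fin m ↦ x (Fin.cast hN.symm (σ ⟨n + 1 + k, by omega⟩))) := by
  subst hN
  rfl

lemma mem_shuffles_one_right {σ : Equiv.Perm (Fin (n + 1))} :
    σ ∈ shuffles n (n + 1) ↔ StrictMonoOn σ {Fin.last n}ᶜ := by
  simp only [shuffles, Finset.mem_filter, Finset.mem_univ, true_and]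
  refine ⟨fun h i _ j hj hij ↦ h.1 i j hij (Fin.val_lt_last hj), fun h ↦ ⟨fun i j hij hj ↦ ?_, ?_⟩⟩
  · exact h (hij.trans_le (Fin.le_last j)).ne (Fin.ne_of_lt hj) hij
  · intro i j hij hi
    exact absurd hi (by omega)

lemma mem_shuffles_two_left {σ : Equiv.Perm (Fin (n + 2))} :
    σ ∈ shuffles 2 (n + 2) ↔ σ 0 < σ 1 ∧ StrictMonoOn σ {0, 1}ᶜ := by
  have mem_compl (i : Fin (n + 2)) : i ∈ ({0, 1}ᶜ : Set (Fin (n + 2))) ↔ 2 ≤ (i : ℕ) := by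
    simp only [Set.mem_compl_iff, Set.mem_insert_iff, Set.mem_singleton_iff, Fin.ext_iff,
      Fin.val_zero, Fin.val_one]
    omega
  simp only [shuffles, Finset.mem_filter, Finset.mem_univ, true_and]
  refine and_congr ⟨fun h ↦ h 0 1 Fin.zero_lt_one (by simp), fun h i j hij hj ↦ ?_⟩
    ⟨fun h i hi j _ hij ↦ h i j hij ((mem_compl i).1 hi), fun h i j hij hi ↦
      h ((mem_compl i).2 hi) ((mem_compl j).2 (hi.trans hij.le)) hij⟩
  obtain rfl : i = 0 := Fin.ext (by rw [Fin.val_zero]; omega)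
  obtain rfl : j = 1 := Fin.ext (by rw [Fin.val_one]; omega)
  exact h

/-- The `(n, 1)`-shuffle whose last value is `i`. -/
def shuffleToLast (i : Fin (n + 1)) : Equiv.Perm (Fin (n + 1)) :=
  i.cycleRange.symm * finRotate (n + 1)

lemma shuffleToLast_last (i : Fin (n + 1)) : shuffleToLast i (Fin.last n) = i := by
  simp [shuffleToLast]

lemma shuffleToLast_castSucc (i : Fin (n + 1)) (k : Fin n) :
    shuffleToLast i k.castSucc = i.succAbove k := by
  simp [shuffleToLast, Fin.coeSucc_eq_succ]

lemma sign_shuffleToLast (i : Fin (n + 1)) :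
    (Equiv.Perm.sign (shuffleToLast i) : ℤ) = (-1) ^ (n + i : ℕ) := by
  simp [shuffleToLast, Fin.sign_cycleRange, sign_finRotate, pow_add, mul_comm]

lemma shuffleToLast_mem_shuffles (i : Fin (n + 1)) : shuffleToLast i ∈ shuffles n (n + 1) := by
  rw [mem_shuffles_one_right]
  intro j hj k hk hjk
  obtain ⟨j, rfl⟩ := Fin.exists_castSucc_eq.2 hj
  obtain ⟨k, rfl⟩ := Fin.exists_castSucc_eq.2 hk
  rw [shuffleToLast_castSucc, shuffleToLast_castSucc]
  exact Fin.strictMono_succAbove i hjk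

lemma sum_shuffles_one_right {A : Type*} [AddCommMonoid A] (F : Equiv.Perm (Fin (n + 1)) → A) :
    ∑ σ ∈ shuffles n (n + 1), F σ = ∑ i, F (shuffleToLast i) := by
  refine .symm <| Finset.sum_nbij shuffleToLast (fun i _ ↦ shuffleToLast_mem_shuffles i)
    (fun i _ j _ hij ↦ ?_) (fun σ hσ ↦ ⟨σ (Fin.last n), Finset.mem_coe.2 (Finset.mem_univ _), ?_⟩)
    fun _ _ ↦ rfl
  · rw [← shuffleToLast_last i, hij, shuffleToLast_last]
  · refine perm_eq_of_strictMonoOn_of_eqOn_compl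
      (mem_shuffles_one_right.1 (shuffleToLast_mem_shuffles _)) (mem_shuffles_one_right.1 hσ) ?_
    simp [shuffleToLast_last]

/-- For `i ≤ j`, the `(2, n)`-shuffle whose first two values are `i` and `j + 1`. -/
def shuffleToFront (i j : Fin (n + 1)) : Equiv.Perm (Fin (n + 2)) :=
  i.castSucc.cycleRange.symm * Equiv.Perm.decomposeFin.symm (0, j.cycleRange.symm)

lemma shuffleToFront_zero (i j : Fin (n + 1)) : shuffleToFront i j 0 = i.castSucc := by
  simp [shuffleToFront]

lemma shuffleToFront_one {i j : Fin (n + 1)} (hij : i ≤ j) : shuffleToFront i j 1 = j.succ := by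
  rw [← Fin.succ_zero_eq_one, shuffleToFront, Equiv.Perm.mul_apply,
    Equiv.Perm.decomposeFin_symm_apply_succ]
  simp [Fin.succAbove_castSucc_of_le _ _ hij]

lemma shuffleToFront_succ_succ (i j : Fin (n + 1)) (k : Fin n) :
    shuffleToFront i j k.succ.succ = i.castSucc.succAbove (j.succAbove k) := by
  rw [shuffleToFront, Equiv.Perm.mul_apply, Equiv.Perm.decomposeFin_symm_apply_succ]
  simp

lemma sign_shuffleToFront (i j : Fin (n + 1)) :
    (Equiv.Perm.sign (shuffleToFront i j) : ℤ) = (-1) ^ (i + j : ℕ) := by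
  simp [shuffleToFront, Fin.sign_cycleRange, pow_add, Equiv.Perm.decomposeFin.symm_sign]

lemma shuffleToFront_mem_shuffles {i j : Fin (n + 1)} (hij : i ≤ j) :
    shuffleToFront i j ∈ shuffles 2 (n + 2) := by
  rw [mem_shuffles_two_left, shuffleToFront_zero, shuffleToFront_one hij]
  refine ⟨Fin.castSucc_lt_succ_iff.2 hij, fun k hk l hl hkl ↦ ?_⟩
  have exists_succ_succ (k : Fin (n + 2)) (hk : k ∈ ({0, 1}ᶜ : Set (Fin (n + 2)))) :
      ∃ k' : Fin n, k'.succ.succ = k := by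
    cases k using Fin.cases with
    | zero => simp at hk
    | succ k =>
      obtain ⟨k', rfl⟩ := Fin.exists_succ_eq.2 (show k ≠ 0 by rintro rfl; simp at hk)
      exact ⟨k', rfl⟩
  obtain ⟨k, rfl⟩ := exists_succ_succ k hk
  obtain ⟨l, rfl⟩ := exists_succ_succ l hl
  rw [shuffleToFront_succ_succ, shuffleToFront_succ_succ]
  exact Fin.strictMono_succAbove _ (Fin.strictMono_succAbove j (by simpa using hkl))

lemma sum_shuffles_two_left {A : Type*} [AddCommMonoid A] (F : Equiv.Perm (Fin (n + 2)) → A) :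
    ∑ σ ∈ shuffles 2 (n + 2), F σ = ∑ i : Fin (n + 1), ∑ j ≥ i, F (shuffleToFront i j) := by
  rw [Finset.sum_sigma']
  refine .symm <| Finset.sum_nbij (fun p ↦ shuffleToFront p.1 p.2) ?_ ?_ ?_ fun _ _ ↦ rfl
  · rintro ⟨i, j⟩ hij
    exact shuffleToFront_mem_shuffles (by simpa using hij)
  · rintro ⟨i, j⟩ hij ⟨i', j'⟩ hij' (h : shuffleToFront i j = shuffleToFront i' j')
    have zero_eq : i.castSucc = i'.castSucc := by
      rw [← shuffleToFront_zero i j, h, shuffleToFront_zero]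
    have one_eq : j.succ = j'.succ := by
      rw [← shuffleToFront_one (by simpa using hij : i ≤ j), h,
        shuffleToFront_one (by simpa using hij')]
    rw [Fin.castSucc_injective _ zero_eq, Fin.succ_injective _ one_eq]
  · intro σ hσ
    obtain ⟨lt, mono⟩ := mem_shuffles_two_left.1 hσ
    obtain ⟨i, hi⟩ := Fin.exists_castSucc_eq.2 (lt.trans_le (Fin.le_last _)).ne
    obtain ⟨j, hj⟩ := Fin.exists_succ_eq.2 (lt.trans_le' (Fin.zero_le _)).ne'
    have hij : i ≤ j := by rwa [← hi, ← hj, Fin.castSucc_lt_succ_iff] at lt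
    refine ⟨⟨i, j⟩, by simpa using hij, perm_eq_of_strictMonoOn_of_eqOn_compl
      (mem_shuffles_two_left.1 (shuffleToFront_mem_shuffles hij)).2 mono ?_⟩
    simp [Set.EqOn, shuffleToFront_zero, shuffleToFront_one hij, hi, hj]

end Shuffles

section NijenhuisRichardson

open AlternatingMap (alternatizeUncurryFin alternatizeUncurryFinLM)

variable {R M : Type*} [CommRing R] [AddCommGroup M] [Module R M] {n : ℕ}

lemma diamond_one_left (μ : (Fin 2 → M) → M) (h : (Fin (n + 1) → M) → M) (x : Fin (n + 2) → M) :
    diamond 1 n μ h (fun i ↦ x (Fin.cast (by omega) i)) =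
      ∑ i : Fin (n + 2), (-1 : ℤ) ^ (n + 1 + i : ℕ) • μ ![h (i.removeNth x), x i] := by
  rw [diamond_eq_sum_shuffles (N := n + 2) (by omega), sum_shuffles_one_right]
  refine Finset.sum_congr rfl fun i _ ↦ ?_
  have shuffle_castLE (k : Fin (n + 1)) :
      shuffleToLast i (Fin.castLE (by omega) k) = i.succAbove k := shuffleToLast_castSucc i k
  have shuffle_last (k : Fin 1) : shuffleToLast i ⟨n + 1 + k, by omega⟩ = i := by
    obtain rfl := Subsingleton.elim k 0
    exact shuffleToLast_last i
  simp only [Fin.cast_cast, Fin.cast_eq_self, shuffle_castLE, shuffle_last,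
    sign_shuffleToLast]
  congr 2
  ext k
  fin_cases k <;> rfl

lemma diamond_one_right (h : (Fin (n + 1) → M) → M) (μ : (Fin 2 → M) → M)
    (x : Fin (n + 2) → M) :
    diamond n 1 h μ x = ∑ i : Fin (n + 1), ∑ j ≥ i, (-1 : ℤ) ^ (i + j : ℕ) •
      h (Matrix.vecCons (μ ![x i.castSucc, x j.succ])
        (j.removeNth (i.castSucc.removeNth x))) := by
  rw [diamond_eq_sum_shuffles (N := n + 2) rfl, sum_shuffles_two_left]
  refine Finset.sum_congr rfl fun i _ ↦ Finset.sum_congr rfl fun j hj ↦ ?_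
  have shuffle_succ_succ (k : Fin n) : shuffleToFront i j ⟨1 + 1 + k, by omega⟩ =
      i.castSucc.succAbove (j.succAbove k) := by
    rw [← shuffleToFront_succ_succ]
    congr 1
    exact Fin.ext (add_comm (1 + 1) (k : ℕ))
  have head_eq : (fun k ↦ x (shuffleToFront i j (Fin.castLE (by omega) k))) =
      ![x i.castSucc, x j.succ] := by
    ext k
    fin_cases k
    · exact congrArg x (shuffleToFront_zero i j)
    · exact congrArg x (shuffleToFront_one (by simpa using hj))
  simp only [Fin.cast_eq_self, sign_shuffleToFront, shuffle_succ_succ, head_eq]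
  rfl

variable [Invertible (2 : R)]

lemma chevalleyEilenberg_apply {B : M →ₗ[R] M →ₗ[R] M} (hB : ∀ x y, B x y = -B y x)
    (f : M [⋀^Fin (n + 1)]→ₗ[R] M) (x : Fin (n + 2) → M) :
    chevalleyEilenberg B f x =
      ∑ i : Fin (n + 2), (-1 : ℤ) ^ (i : ℕ) • B (x i) (f (i.removeNth x)) -
        ∑ i : Fin (n + 1), ∑ j ≥ i, (-1 : ℤ) ^ (i + j : ℕ) •
          f (Matrix.vecCons (B (x i.castSucc) (x j.succ))
            (j.removeNth (i.castSucc.removeNth x))) := by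
  have half_sub (u v : M) (w : Fin n → M) :
      ⅟(2 : R) • (f (Matrix.vecCons (B u v) w) - f (Matrix.vecCons (B v u) w)) =
        f (Matrix.vecCons (B u v) w) := by
    have bracket_flip : f (Matrix.vecCons (B v u) w) = -f (Matrix.vecCons (B u v) w) := by
      rw [hB v u, ← f.curryLeft_apply_apply, map_neg]
      rfl
    rw [bracket_flip, sub_neg_eq_add, smul_add, invOf_two_smul_add_invOf_two_smul]
  have eq_sub_half : chevalleyEilenberg B f =
      alternatizeUncurryFinLM ((compAlternatingMapBilin ∘ₗ B).flip f) -
        ⅟(2 : R) • alternatizeUncurryFinLM (alternatizeUncurryFinLM ∘ₗ B.compr₂ f.curryLeft) := by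
    rw [← map_smul, ← map_sub]
    rfl
  rw [eq_sub_half, AlternatingMap.sub_apply, AlternatingMap.smul_apply,
    AlternatingMap.alternatizeUncurryFinLM_apply, AlternatingMap.alternatizeUncurryFinLM_apply,
    AlternatingMap.alternatizeUncurryFin_alternatizeUncurryFinLM_comp_apply,
    AlternatingMap.alternatizeUncurryFin_apply]
  simp only [Finset.smul_sum, smul_comm (⅟(2 : R)), LinearMap.compr₂_apply,
    AlternatingMap.curryLeft_apply_apply, half_sub]
  rfl

lemma nrNR_one_left_apply {B : M →ₗ[R] M →ₗ[R] M} (hB : ∀ x y, B x y = -B y x)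
    (f : M [⋀^Fin (n + 1)]→ₗ[R] M) (x : Fin (n + 2) → M) :
    nrNR 1 n (fun v ↦ B (v 0) (v 1)) f (fun i ↦ x (Fin.cast (by omega) i)) =
      (-1 : ℤ) ^ n • chevalleyEilenberg B f x := by
  rw [nrNR, diamond_one_left, chevalleyEilenberg_apply hB, smul_sub, one_mul]
  congr 1
  · rw [Finset.smul_sum]
    refine Finset.sum_congr rfl fun i _ ↦ ?_
    rw [smul_smul, ← pow_add, add_right_comm, pow_succ, mul_neg_one, neg_smul, ← smul_neg]
    exact congrArg _ (neg_eq_iff_eq_neg.2 (hB _ _))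
  · exact congrArg _ (diamond_one_right _ _ x)

lemma nrNR_one_left_eq_domDomCongr {B : M →ₗ[R] M →ₗ[R] M} (hB : ∀ x y, B x y = -B y x)
    (f : M [⋀^Fin (n + 1)]→ₗ[R] M) :
    nrNR 1 n (fun v ↦ B (v 0) (v 1)) f =
      ((-1 : ℤ) ^ n • chevalleyEilenberg B f).domDomCongr
        (finCongr (by omega : n + 2 = 1 + n + 1)) :=
  funext fun x ↦ nrNR_one_left_apply hB f fun i ↦ x (Fin.cast (by omega) i)

lemma chevalleyEilenberg_domDomCongr_finCongr {m : ℕ} (B : M →ₗ[R] M →ₗ[R] M) (h : m = n)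
    (f : M [⋀^Fin m]→ₗ[R] M) :
    chevalleyEilenberg B (f.domDomCongr (finCongr h)) =
      (chevalleyEilenberg B f).domDomCongr (finCongr (congrArg (· + 1) h)) := by
  subst h
  rfl

theorem nrNR_nrNR_eq_neg_chevalleyEilenberg {B B' : M →ₗ[R] M →ₗ[R] M}
    (hB : ∀ x y, B x y = -B y x) (hB' : ∀ x y, B' x y = -B' y x)
    (f : M [⋀^Fin (n + 1)]→ₗ[R] M) (x : Fin (n + 3) → M) :
    nrNR 1 (1 + n) (fun v ↦ B (v 0) (v 1)) (nrNR 1 n (fun v ↦ B' (v 0) (v 1)) f)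
        (fun i ↦ x (Fin.cast (by omega) i)) =
      -chevalleyEilenberg B (chevalleyEilenberg B' f) x := by
  rw [nrNR_one_left_eq_domDomCongr hB', nrNR_one_left_eq_domDomCongr hB,
    chevalleyEilenberg_domDomCongr_finCongr, map_zsmul]
  change (-1 : ℤ) ^ (1 + n) • (-1 : ℤ) ^ n • chevalleyEilenberg B (chevalleyEilenberg B' f) x = _
  rw [smul_smul, ← pow_add, add_assoc, pow_add, (Even.add_self n).neg_one_pow, mul_one, pow_one,
    neg_one_smul]

theorem stmt_6_general (B B' : M →ₗ[R] M →ₗ[R] M)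
    (hB : ∀ x y, B x y = -B y x) (hB' : ∀ x y, B' x y = -B' y x)
    (hcompat : ∀ x y z, B (B' x y) z + B' (B x y) z =
      B (B' x z) y + B' (B x z) y + B x (B' y z) + B' x (B y z))
    (m : ℕ) (f : M [⋀^Fin (m + 1)]→ₗ[R] M) (x : Fin (1 + (1 + m) + 1) → M) :
    nrNR 1 (1 + m) (fun v ↦ B (v 0) (v 1)) (nrNR 1 m (fun v ↦ B' (v 0) (v 1)) f) x +
      nrNR 1 (1 + m) (fun v ↦ B' (v 0) (v 1)) (nrNR 1 m (fun v ↦ B (v 0) (v 1)) f) x = 0 := by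
  let y : Fin (m + 3) → M := fun i ↦ x (Fin.cast (by omega) i)
  have anticomm :=
    chevalleyEilenberg_anticomm hB hB' (lie_add_lie_of_compatible hB hB' hcompat) f
  calc
    _ = -chevalleyEilenberg B (chevalleyEilenberg B' f) y +
          -chevalleyEilenberg B' (chevalleyEilenberg B f) y :=
      congrArg₂ (· + ·) (nrNR_nrNR_eq_neg_chevalleyEilenberg hB hB' f y)
        (nrNR_nrNR_eq_neg_chevalleyEilenberg hB' hB f y)
    _ = 0 := by rw [← neg_add, ← AlternatingMap.add_apply, anticomm, AlternatingMap.zero_apply,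
      neg_zero]

end NijenhuisRichardson

/-- for a compatible Lie algebra `(g, μ, μ')`, the operators
`∂_μ = [μ,−]_NR` and `∂_{μ'} = [μ',−]_NR` anticommute on alternating multilinear maps:
`[μ,[μ',f]_NR]_NR + [μ',[μ,f]_NR]_NR = 0`. -/
theorem stmt_6
    (B B' : g →ₗ[K] g →ₗ[K] g)
    (hBskew : ∀ x y : g, B x y = - B y x)
    (hB'skew : ∀ x y : g, B' x y = - B' y x)
    (hBjac : ∀ x y z : g, B (B x y) z + B (B y z) x + B (B z x) y = 0)
    (hB'jac : ∀ x y z : g, B' (B' x y) z + B' (B' y z) x + B' (B' z x) y = 0)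
    (hcompat : ∀ x y z : g, B (B' x y) z + B' (B x y) z
      = B (B' x z) y + B' (B x z) y + B x (B' y z) + B' x (B y z))
    (m : ℕ) (f : AlternatingMap K g g (Fin (m + 1)))
    (x : Fin (1 + (1 + m) + 1) → g) :
    nrNR 1 (1 + m) (fun v => B (v 0) (v 1)) (nrNR 1 m (fun v => B' (v 0) (v 1)) ⇑f) x +
      nrNR 1 (1 + m) (fun v => B' (v 0) (v 1)) (nrNR 1 m (fun v => B (v 0) (v 1)) ⇑f) x
      = 0 := by
  have : Invertible (2 : K) := invertibleOfNonzero two_ne_zero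
  exact stmt_6_general B B' hBskew hB'skew hcompat m f x
end

section
/- Let L₋₁, L₀ be vector spaces over a field of characteristic 0, let l: L₋₁ → L₀ be a linear map, and suppose (L₋₁ ⊕ L₀, l, l₂, l₃) and (L₋₁ ⊕ L₀, l, l₂', l₃') are 2-term L∞-algebras with the same differential l. Then the compatibility conditions (C1)–(C5) hold (for all w,x,y,z ∈ L₀ and h,k ∈ L₋₁): (C1) l(l₂'(x,h)) + l(l₂(x,h)) = l₂(x,l(h)) + l₂'(x,l(h)); (C2) l₂(l(h),k) + l₂'(l(h),k) = l₂(h,l(k)) + l₂'(h,l(k)); (C3) l(l₃'(x,y,z)) + l(l₃(x,y,z)) = −l₂(l₂'(x,y),z) − l₂'(l₂(x,y),z) + l₂(l₂'(x,z),y) + l₂'(l₂(x,z),y) + l₂(x,l₂'(y,z)) + l₂'(x,l₂(y,z)); (C4) l₃(l(h),x,y) + l₃'(l(h),x,y) = −l₂(l₂'(x,y),h) − l₂'(l₂(x,y),h) + l₂(l₂'(x,h),y) + l₂'(l₂(x,h),y) + l₂(x,l₂'(y,h)) + l₂'(x,l₂(y,h)); (C5) l₂(l₃'(w,x,y),z)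 + l₂'(l₃(w,x,y),z) + l₂(l₃'(w,y,z),x) + l₂'(l₃(w,y,z),x) − l₂(l₃'(w,x,z),y) − l₂'(l₃(w,x,z),y) − l₂(l₃'(x,y,z),w) − l₂'(l₃(x,y,z),w) = l₃(l₂'(w,x),y,z) + l₃'(l₂(w,x),y,z) − l₃(l₂'(w,y),x,z) − l₃'(l₂(w,y),x,z) + l₃(l₂'(w,z),x,y) + l₃'(l₂(w,z),x,y) + l₃(l₂'(x,y),w,z) + l₃'(l₂(x,y),w,z) − l₃(l₂'(x,z),w,y) − l₃'(l₂(x,z),w,y) + l₃(l₂'(y,z),w,x) + l₃'(l₂(y,z),w,x) — if and only if (L₋₁ ⊕ L₀, l, l₂ + l₂', 2(l₃ + l₃')) is a 2-term L∞-algebra. -/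
variable {K : Type*} [Field K] [CharZero K]
variable {A M : Type*} [AddCommGroup A] [Module K A] [AddCommGroup M] [Module K M]

/-- A 2-term L∞-algebra structure on `L₋₁ ⊕ L₀` with `L₋₁ = A`, `L₀ = M`:
`d = l₁ : A → M`, `b = l₂ : M × M → M` (skew-symmetric), `a = l₂ : M × A → A` (with the
convention `l₂(h,x) = −l₂(x,h) = −a x h`), and `t = l₃ : M³ → A` (alternating), subject to
the axioms (L1)–(L5). -/
structure IsL2 (d : A →ₗ[K] M) (b : M →ₗ[K] M →ₗ[K] M)
    (a : M →ₗ[K] A →ₗ[K] A) (t : M →ₗ[K] M →ₗ[K] M →ₗ[K] A) : Prop where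
  b_skew : ∀ x y : M, b x y = - b y x
  t_skew12 : ∀ x y z : M, t x y z = - t y x z
  t_skew23 : ∀ x y z : M, t x y z = - t x z y
  L1 : ∀ (x : M) (h : A), d (a x h) = b x (d h)
  L2 : ∀ h k : A, a (d h) k = - a (d k) h
  L3 : ∀ x y z : M, d (t x y z) = - b (b x y) z + b (b x z) y + b x (b y z)
  L4 : ∀ (h : A) (x y : M),
    t (d h) x y = - a (b x y) h - a y (a x h) + a x (a y h)
  L5 : ∀ w x y z : M,
    - a z (t w x y) - a x (t w y z) + a y (t w x z) + a w (t x y z)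
      = t (b w x) y z - t (b w y) x z + t (b w z) x y
        + t (b x y) w z - t (b x z) w y + t (b y z) w x

/-- The compatibility conditions (C1)–(C5) between two 2-term L∞-algebra structures
`(d,b,a,t)` and `(d',b',a',t')` on `L₋₁ ⊕ L₀` (with the convention
`l₂(h,x) = −a x h`, `l₂'(h,x) = −a' x h`). -/
structure IsCompat2 (d d' : A →ₗ[K] M) (b b' : M →ₗ[K] M →ₗ[K] M)
    (a a' : M →ₗ[K] A →ₗ[K] A) (t t' : M →ₗ[K] M →ₗ[K] M →ₗ[K] A) : Prop where
  C1 : ∀ (x : M) (h : A), d (a' x h) + d' (a x h) = b x (d' h) + b' x (d h)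
  C2 : ∀ h k : A, a (d' h) k + a' (d h) k = - a (d' k) h - a' (d k) h
  C3 : ∀ x y z : M, d (t' x y z) + d' (t x y z)
    = - b (b' x y) z - b' (b x y) z + b (b' x z) y + b' (b x z) y
      + b x (b' y z) + b' x (b y z)
  C4 : ∀ (h : A) (x y : M),
    t (d' h) x y + t' (d h) x y
      = - a (b' x y) h - a' (b x y) h - a y (a' x h) - a' y (a x h)
        + a x (a' y h) + a' x (a y h)
  C5 : ∀ w x y z : M,
    - a z (t' w x y) - a' z (t w x y) - a x (t' w y z) - a' x (t w y z)
      + a y (t' w x z) + a' y (t w x z) + a w (t' x y z) + a' w (t x y z)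
      = t (b' w x) y z + t' (b w x) y z - t (b' w y) x z - t' (b w y) x z
        + t (b' w z) x y + t' (b w z) x y + t (b' x y) w z + t' (b x y) w z
        - t (b' x z) w y - t' (b x z) w y + t (b' y z) w x + t' (b y z) w x

/-!
The axioms (L1)–(L5) are homogeneous quadratic in the structure maps `(l₁, l₂, l₃)`, and the
compatibility conditions are their polarizations: two structures are compatible iff
`(l₁ + l₁', l₂ + l₂', l₃ + l₃')` is again a 2-term L∞-algebra. When `l₁ = l₁' = l`
this sum has differential `2l`, and multiplication by `2` on `L₋₁` identifies it with
`(l, l₂ + l₂', 2(l₃ + l₃'))`, so the factor `2` moves from `l₁` to `l₃`.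
-/

section

variable {F : Type*} [Field F]
variable {V W : Type*} [AddCommGroup V] [Module F V] [AddCommGroup W] [Module F W]
variable {d d' : V →ₗ[F] W} {b b' : W →ₗ[F] W →ₗ[F] W} {a a' : W →ₗ[F] V →ₗ[F] V}
  {t t' : W →ₗ[F] W →ₗ[F] W →ₗ[F] V}

theorem IsL2.add (hL : IsL2 d b a t) (hL' : IsL2 d' b' a' t')
    (hC : IsCompat2 d d' b b' a a' t t') :
    IsL2 (d + d') (b + b') (a + a') (t + t') := by
  constructor <;> intros <;> simp only [LinearMap.add_apply, map_add]
  case b_skew x y => linear_combination (norm := abel) hL.b_skew x y + hL'.b_skew x y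
  case t_skew12 x y z =>
    linear_combination (norm := abel) hL.t_skew12 x y z + hL'.t_skew12 x y z
  case t_skew23 x y z =>
    linear_combination (norm := abel) hL.t_skew23 x y z + hL'.t_skew23 x y z
  case L1 x h => linear_combination (norm := abel) hL.L1 x h + hL'.L1 x h + hC.C1 x h
  case L2 h k => linear_combination (norm := abel) hL.L2 h k + hL'.L2 h k + hC.C2 h k
  case L3 x y z =>
    linear_combination (norm := abel) hL.L3 x y z + hL'.L3 x y z + hC.C3 x y z
  case L4 h x y =>
    linear_combination (norm := abel) hL.L4 h x y + hL'.L4 h x y + hC.C4 h x y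
  case L5 w x y z =>
    linear_combination (norm := abel) hL.L5 w x y z + hL'.L5 w x y z + hC.C5 w x y z

theorem IsCompat2.of_isL2_add (hL : IsL2 d b a t) (hL' : IsL2 d' b' a' t')
    (hS : IsL2 (d + d') (b + b') (a + a') (t + t')) :
    IsCompat2 d d' b b' a a' t t' := by
  obtain ⟨-, -, -, hS₁, hS₂, hS₃, hS₄, hS₅⟩ := hS
  simp only [LinearMap.add_apply, map_add] at hS₁ hS₂ hS₃ hS₄ hS₅
  constructor <;> intros
  case C1 x h => linear_combination (norm := abel) hS₁ x h - hL.L1 x h - hL'.L1 x h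
  case C2 h k => linear_combination (norm := abel) hS₂ h k - hL.L2 h k - hL'.L2 h k
  case C3 x y z =>
    linear_combination (norm := abel) hS₃ x y z - hL.L3 x y z - hL'.L3 x y z
  case C4 h x y =>
    linear_combination (norm := abel) hS₄ h x y - hL.L4 h x y - hL'.L4 h x y
  case C5 w x y z =>
    linear_combination (norm := abel) hS₅ w x y z - hL.L5 w x y z - hL'.L5 w x y z

theorem isCompat2_iff_isL2_add (hL : IsL2 d b a t) (hL' : IsL2 d' b' a' t') :
    IsCompat2 d d' b b' a a' t t' ↔ IsL2 (d + d') (b + b') (a + a') (t + t') :=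
  ⟨hL.add hL', .of_isL2_add hL hL'⟩

theorem IsL2.of_smul_differential {c : F} (hc : c ≠ 0) (hL : IsL2 (c • d) b a t) :
    IsL2 d b a (c • t) := by
  obtain ⟨b_skew, t_skew12, t_skew23, hL₁, hL₂, hL₃, hL₄, hL₅⟩ := hL
  simp only [LinearMap.smul_apply, map_smul, ← smul_neg, smul_right_inj hc] at hL₁ hL₂ hL₃ hL₄
  refine ⟨b_skew, ?skew12, ?skew23, hL₁, hL₂, ?jacobiator, hL₄, ?coherence⟩ <;> intros <;>
    simp only [LinearMap.smul_apply, map_smul]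
  case skew12 x y z => rw [t_skew12, smul_neg]
  case skew23 x y z => rw [t_skew23, smul_neg]
  case jacobiator x y z => exact hL₃ x y z
  case coherence w x y z => linear_combination (norm := module) c • hL₅ w x y z

theorem isL2_smul_differential_iff {c : F} (hc : c ≠ 0) :
    IsL2 (c • d) b a t ↔ IsL2 d b a (c • t) := by
  refine ⟨.of_smul_differential hc, fun hL => ?_⟩
  rw [← inv_smul_smul₀ hc d] at hL
  simpa only [inv_smul_smul₀ hc] using hL.of_smul_differential (inv_ne_zero hc)

theorem stmt_11_general [NeZero (2 : F)] (hL : IsL2 d b a t) (hL' : IsL2 d b' a' t') :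
    IsCompat2 d d b b' a a' t t' ↔ IsL2 d (b + b') (a + a') (2 • (t + t')) := by
  rw [isCompat2_iff_isL2_add hL hL', ← two_smul F d, isL2_smul_differential_iff two_ne_zero,
    ofNat_smul_eq_nsmul]

end

/-- for two 2-term L∞-algebras with the same differential `d`, the
compatibility conditions (C1)–(C5) hold iff `(A ⊕ M, d, b + b', 2(t + t'))` is a 2-term
L∞-algebra. -/
theorem stmt_11 (d : A →ₗ[K] M) (b b' : M →ₗ[K] M →ₗ[K] M)
    (a a' : M →ₗ[K] A →ₗ[K] A) (t t' : M →ₗ[K] M →ₗ[K] M →ₗ[K] A)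
    (hL : IsL2 d b a t) (hL' : IsL2 d b' a' t') :
    IsCompat2 d d b b' a a' t t' ↔ IsL2 d (b + b') (a + a') (2 • (t + t')) :=
  stmt_11_general hL hL'
end
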